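/- arXiv:2407.19539 — 2 statements merged into one kernel-verified Lean document; each statement's English description precedes it below -/
import Mathlib

section
/- Let B be a finite Blaschke product of degree d, i.e., B(z) = e^{is}·∏_{k=1}^{d} (z−a_k)/(1−z·conj(a_k)) with |a_k|<1. Then for every t ∈ [0,1], the Lebesgue measure of {z ∈ 𝔻 : |B(z)| < t} is at most π·t^{2/d}. -/
/-!
Write `b` for the Blaschke product, `A(t)` for the area of `{|b| < t}` inside the disc and
`∂̄g = ∂₁g + i ∂ᵢg` (twice the usual operator). The heart of the proof is the differential
inequality `2 A ≤ d t A'(t)` in integrated form,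
`A(s) · 2 log (t / s) ≤ d (A(t) - A(s))` for `0 < s < t < 1`
(`ring_step'`). Composing this along a fine geometric subdivision of `[s, t]` gives
`A(s) (t / s) ^ (2 / d) ≤ A(t)` in the limit; the bound `A ≤ π` then yields the theorem as `t` is
sent to `1` (`growth`).

For the inequality, take a `C¹` cutoff `χ = η(|b|²)`, extended by zero outside the disc, which is
equal to a constant `N` on `{|b| < s}` and vanishes off `{|b| < t}`, where `η' = -h` with
`0 ≤ x h(x) ≤ 1` and `N = ∫ h` as close as desired to `log (t² / s²)`.

* *Duality* (`duality`): the Cauchy-Pompeiu formula represents `χ = N` on `E = {|b| < s}` as a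
  Cauchy transform of `∂̄χ`. Integrating over `E` and using the Ahlfors-Beurling bound
  `|∫_E dA(w) / (z - w)|² ≤ π |E|` gives `4π N² |E| ≤ (∫ |∂̄χ|)²`.
* *Support*: `∂̄χ` lives on the ring `{s ≤ |b| < t}`, so by Cauchy-Schwarz
  `(∫ |∂̄χ|)² ≤ (A(t) - A(s)) ∫ |∂̄χ|²`.
* *Energy* (`energy_le`): pointwise `|∂̄χ|² ≤ -2 ∂̄χ · b'/b` because `x h(x) ≤ 1`. Since `b'/b` is
  the sum of the kernels `1 / (z - aₖ) + conj aₖ / (1 - z conj aₖ)`, whose poles are the zeros of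
  `b` and their reflections outside the disc, the Cauchy-Pompeiu formula evaluates the integral of
  the right-hand side and gives `∫ |∂̄χ|² ≤ 4π d N`.

Together these give `A(s) N ≤ d (A(t) - A(s))`.
-/

open MeasureTheory Complex ComplexConjugate

/-! ### The Cauchy-Pompeiu formula -/

/-- A continuous function of polar coordinates vanishing for large radius is integrable on the
unbounded coordinate domain. -/
lemma integrableOn_polar {U : ℝ × ℝ → ℂ} (hU : Continuous U) {R : ℝ}
    (h0 : ∀ p, R < p.1 → U p = 0) :
    IntegrableOn U (Set.Ioi (0:ℝ) ×ˢ Set.Ioo (-Real.pi) Real.pi) := by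
  have h1 : IntegrableOn U (Set.Icc (0:ℝ) R ×ˢ Set.Icc (-Real.pi) Real.pi) :=
    hU.continuousOn.integrableOn_compact (isCompact_Icc.prod isCompact_Icc)
  refine h1.of_forall_sdiff_eq_zero (measurableSet_Ioi.prod measurableSet_Ioo) ?_
  rintro ⟨r, θ⟩ ⟨h2, h3⟩
  apply h0
  by_contra hr
  simp only [Set.mem_prod, Set.mem_Ioi, Set.mem_Ioo, Set.mem_Icc] at h2 h3
  exact h3 ⟨⟨h2.1.le, not_lt.1 hr⟩, h2.2.1.le, h2.2.2.le⟩

/-- The Cauchy-Pompeiu formula at the origin. In polar coordinates the integrand (times the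
Jacobian `r`) is the radial derivative of `g`, which integrates to `-g 0` along every ray, plus
`i / r` times the angular derivative, which integrates to zero over every circle. -/
lemma pompeiu_zero {g : ℂ → ℂ} (hg : ContDiff ℝ 1 g) (hc : HasCompactSupport g) :
    ∫ z, (fderiv ℝ g z 1 + I * fderiv ℝ g z I) / z = -(2 * Real.pi) * g 0 := by
  obtain ⟨R, hR⟩ : ∃ R : ℝ, ∀ z : ℂ, R < ‖z‖ → g z = 0 := by
    obtain ⟨R, hR⟩ := hc.isCompact.isBounded.exists_norm_le
    exact ⟨R, fun z hz => image_eq_zero_of_notMem_tsupport fun h => (hR z h).not_gt hz⟩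
  have hR' : ∀ z : ℂ, R < ‖z‖ → fderiv ℝ g z = 0 := by
    intro z hz
    have : g =ᶠ[nhds z] fun _ => 0 := by
      filter_upwards [continuous_norm.continuousAt.eventually (lt_mem_nhds hz)] with y hy
      exact hR y hy
    rw [this.fderiv_eq]; simp
  have hfc : Continuous (fderiv ℝ g) := hg.continuous_fderiv one_ne_zero
  set e : ℝ → ℂ := fun θ => exp (θ * I) with he
  have hec : Continuous e := by fun_prop
  have hen : ∀ θ, ‖e θ‖ = 1 := fun θ => norm_exp_ofReal_mul_I θ
  set P : ℝ × ℝ → ℂ := fun p => p.1 * e p.2 with hP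
  have hPc : Continuous P := by fun_prop
  -- `U` is the radial derivative of `g`, and `V` is `I / r` times its angular derivative.
  set U : ℝ × ℝ → ℂ := fun p => fderiv ℝ g (P p) (e p.2) with hUdef
  set V : ℝ × ℝ → ℂ := fun p => I * fderiv ℝ g (P p) (I * e p.2) with hVdef
  have hPn : ∀ p : ℝ × ℝ, R < p.1 → R < ‖P p‖ := by
    intro p hp
    simp only [hP, norm_mul, hen, mul_one, norm_real]
    exact hp.trans_le (le_abs_self _)
  have hUc : Continuous U := (hfc.comp hPc).clm_apply (by fun_prop)
  have hVc : Continuous V :=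
    continuous_const.mul ((hfc.comp hPc).clm_apply (by fun_prop))
  have hU0 : ∀ p, R < p.1 → U p = 0 := fun p hp => by simp [hUdef, hR' _ (hPn p hp)]
  have hV0 : ∀ p, R < p.1 → V p = 0 := fun p hp => by simp [hVdef, hR' _ (hPn p hp)]
  have hUi := integrableOn_polar hUc hU0
  have hVi := integrableOn_polar hVc hV0
  rw [← Complex.integral_comp_polarCoord_symm]
  have htar : polarCoord.target = Set.Ioi (0:ℝ) ×ˢ Set.Ioo (-Real.pi) Real.pi := rfl
  rw [htar]
  have hsplit : ∀ p ∈ Set.Ioi (0:ℝ) ×ˢ Set.Ioo (-Real.pi) Real.pi,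
      p.1 • ((fderiv ℝ g (Complex.polarCoord.symm p) 1 +
        I * fderiv ℝ g (Complex.polarCoord.symm p) I) / Complex.polarCoord.symm p) =
      U p + V p := by
    rintro ⟨r, θ⟩ ⟨hr, -⟩
    have hr : (r:ℂ) ≠ 0 := by exact_mod_cast (ne_of_gt hr)
    have h1 : Complex.polarCoord.symm (r, θ) = P (r, θ) := by
      simp [Complex.polarCoord_symm_apply, hP, he, exp_mul_I]
    rw [h1]
    have h2 : ∀ z : ℂ, fderiv ℝ g (P (r, θ)) z =
        z.re * fderiv ℝ g (P (r, θ)) 1 + z.im * fderiv ℝ g (P (r, θ)) I := by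
      intro z
      have : z = z.re • (1:ℂ) + z.im • I := by
        simp [Complex.re_add_im]
      conv_lhs => rw [this]
      rw [map_add, map_smul, map_smul]
      simp
    simp only [hUdef, hVdef]
    rw [h2 (e θ), h2 (I * e θ)]
    have h3 : P (r, θ) = r * e θ := rfl
    have h4 : e θ = ((e θ).re : ℂ) + (e θ).im * I := (re_add_im _).symm
    have h5 : ((e θ).re : ℂ) ^ 2 + (e θ).im ^ 2 = 1 := by
      have : ‖e θ‖ ^ 2 = 1 := by rw [hen]; norm_num
      rw [← normSq_eq_norm_sq, normSq_apply] at this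
      exact_mod_cast (by nlinarith : (e θ).re ^ 2 + (e θ).im ^ 2 = 1)
    have h6 : e θ ≠ 0 := by simp [he]
    generalize fderiv ℝ g (P (r, θ)) = L at *
    rw [h3, real_smul]
    simp only [mul_re, mul_im, I_re, I_im, zero_mul, one_mul, zero_sub, zero_add, zero_add]
    rw [mul_div_mul_left _ _ hr |> fun h => (mul_div_assoc _ _ _).symm.trans h, div_eq_iff h6]
    push_cast
    generalize ((e θ).re : ℂ) = x at *
    generalize ((e θ).im : ℂ) = y at *
    rw [h4]
    -- Only `(Re e)² + (Im e)² = 1` and `I² = -1` are needed here.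
    linear_combination (-(L 1) - I * L I) * h5 + (y^2 * L 1 - x * y * L I) * I_sq
  rw [setIntegral_congr_fun (measurableSet_Ioi.prod measurableSet_Ioo) hsplit,
    integral_add hUi hVi]
  have hV : ∫ p in Set.Ioi (0:ℝ) ×ˢ Set.Ioo (-Real.pi) Real.pi, V p = 0 := by
    rw [Measure.volume_eq_prod] at hVi ⊢
    rw [setIntegral_prod _ hVi]
    apply integral_eq_zero_of_ae
    rw [Filter.EventuallyEq, ae_restrict_iff' measurableSet_Ioi]
    refine .of_forall fun r hr => ?_
    have hr : (r:ℂ) ≠ 0 := by exact_mod_cast (ne_of_gt hr)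
    have hder : ∀ θ : ℝ, HasDerivAt (fun θ : ℝ => I / r * g (P (r, θ))) (V (r, θ)) θ := by
      intro θ
      have h1 : HasDerivAt (fun θ : ℝ => P (r, θ)) (r * (I * e θ)) θ := by
        have : HasDerivAt (fun θ : ℝ => exp (θ * I)) (exp (θ * I) * (1 * I)) θ :=
          (HasDerivAt.cexp ((ofRealCLM.hasDerivAt (x := θ)).mul_const I))
        convert! this.const_mul (r:ℂ) using 1
        simp [he]
        left; ring
      have h2 := ((hg.differentiable one_ne_zero (P (r, θ))).hasFDerivAt.comp_hasDerivAt θ h1)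
      convert! h2.const_mul (I / (r:ℂ)) using 1
      simp only [hVdef]
      have : (r:ℂ) * (I * e θ) = r • (I * e θ) := by simp
      rw [this, map_smul, real_smul]
      field_simp
    rw [← integral_Ioc_eq_integral_Ioo, ← intervalIntegral.integral_of_le
      (by linarith [Real.pi_pos]), intervalIntegral.integral_eq_sub_of_hasDerivAt
      (fun θ _ => hder θ) ((hVc.comp (by fun_prop)).intervalIntegrable _ _)]
    have : e Real.pi = e (-Real.pi) := by simp [he, exp_neg]
    simp [hP, this]
  have hU : ∫ p in Set.Ioi (0:ℝ) ×ˢ Set.Ioo (-Real.pi) Real.pi, U p =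
      -(2 * Real.pi) * g 0 := by
    rw [Measure.volume_eq_prod] at hUi ⊢
    have hUs := hUi.swap
    rw [← setIntegral_prod_swap]
    change ∫ z in _, (U ∘ Prod.swap) z ∂_ = _
    rw [setIntegral_prod _ hUs]
    have : ∀ θ : ℝ, ∫ r in Set.Ioi (0:ℝ), U (r, θ) = - g 0 := by
      intro θ
      have hder : ∀ r : ℝ, HasDerivAt (fun r : ℝ => g (P (r, θ))) (U (r, θ)) r := by
        intro r
        have h1 : HasDerivAt (fun r : ℝ => P (r, θ)) (e θ) r := by
          convert! (ofRealCLM.hasDerivAt (x := r)).mul_const (e θ) using 1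
          simp
        exact ((hg.differentiable one_ne_zero (P (r, θ))).hasFDerivAt.comp_hasDerivAt r h1)
      have hcU : Continuous fun r : ℝ => U (r, θ) := hUc.comp (by fun_prop)
      have hi : IntegrableOn (fun r : ℝ => U (r, θ)) (Set.Ioi 0) := by
        refine (hcU.continuousOn.integrableOn_compact (isCompact_Icc (a := 0) (b := R))).of_forall_sdiff_eq_zero
          measurableSet_Ioi ?_
        rintro r ⟨h2, h3⟩
        apply hU0
        by_contra hr
        exact h3 ⟨(Set.mem_Ioi.1 h2).le, not_lt.1 hr⟩
      rw [integral_Ioi_of_hasDerivAt_of_tendsto' (m := 0) (fun r _ => hder r) hi]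
      · simp [hP]
      · refine tendsto_const_nhds.congr' ?_
        filter_upwards [Filter.eventually_gt_atTop R] with r hr
        exact (hR _ (hPn _ hr)).symm
    simp only [Function.comp_apply, Prod.swap_prod_mk, this]
    simp [Real.pi_pos.le]
    left; ring
  rw [hU, hV, add_zero]

/-- The Cauchy-Pompeiu formula for compactly supported `C¹` functions. -/
lemma pompeiu {g : ℂ → ℂ} (hg : ContDiff ℝ 1 g) (hc : HasCompactSupport g) (w : ℂ) :
    ∫ z, (fderiv ℝ g z 1 + I * fderiv ℝ g z I) / (z - w) = -(2 * Real.pi) * g w := by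
  have h := pompeiu_zero (g := fun z => g (z + w)) (hg.comp (by fun_prop))
    (hc.comp_homeomorph (Homeomorph.addRight w))
  simp only [fderiv_comp_add_right, zero_add] at h
  rw [← h, ← integral_add_right_eq_self _ w]
  simp

/-! ### The Ahlfors-Beurling estimate -/

lemma lint_inner {c x : ℝ} (hc : 0 < c) :
    ∫⁻ r in Set.Ioi (0:ℝ), ENNReal.ofReal (x - c * r) ≤
      ENNReal.ofReal ((max 0 x) ^ 2 / (2 * c)) := by
  rcases le_or_gt x 0 with hx | hx
  · have : ∫⁻ r in Set.Ioi (0:ℝ), ENNReal.ofReal (x - c * r) = 0 := by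
      rw [setLIntegral_congr_fun (g := fun _ => 0) measurableSet_Ioi]
      · simp
      · intro r hr
        have := mul_pos hc (Set.mem_Ioi.1 hr)
        simp only [ENNReal.ofReal_eq_zero]; linarith
    rw [this]; exact zero_le
  · have h1 : ∫⁻ r in Set.Ioi (0:ℝ), ENNReal.ofReal (x - c * r) =
        ∫⁻ r in Set.Ioc (0:ℝ) (x / c), ENNReal.ofReal (x - c * r) := by
      rw [← lintegral_indicator measurableSet_Ioi, ← lintegral_indicator measurableSet_Ioc]
      congr 1
      ext r
      by_cases h2 : r ∈ Set.Ioc 0 (x / c)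
      · rw [Set.indicator_of_mem h2, Set.indicator_of_mem (Set.mem_Ioi.2 h2.1)]
      · rw [Set.indicator_of_notMem h2, Set.indicator_apply_eq_zero]
        intro h3
        have h4 : x / c < r := by
          by_contra h; exact h2 ⟨h3, not_lt.1 h⟩
        rw [div_lt_iff₀ hc] at h4
        rw [ENNReal.ofReal_eq_zero]; linarith
    rw [h1, ← ofReal_integral_eq_lintegral_ofReal]
    · apply ENNReal.ofReal_le_ofReal
      rw [← intervalIntegral.integral_of_le (by positivity), max_eq_right hx.le]
      rw [intervalIntegral.integral_sub (by simp) (Continuous.intervalIntegrable (by fun_prop) _ _)]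
      rw [intervalIntegral.integral_const_mul, integral_id]
      simp
      apply le_of_eq; field_simp; norm_num
    · exact (Continuous.integrableOn_Ioc (by fun_prop))
    · rw [Filter.EventuallyLE, ae_restrict_iff' measurableSet_Ioc]
      refine .of_forall fun r hr => ?_
      have := (le_div_iff₀ hc).1 hr.2
      simp only [Pi.zero_apply]; linarith

lemma lint_outer {c : ℝ} (hc : 0 < c) :
    ∫⁻ θ in Set.Ioo (-Real.pi) Real.pi, ENNReal.ofReal ((max 0 (Real.cos θ)) ^ 2 / (2 * c)) =
      ENNReal.ofReal (Real.pi / (4 * c)) := by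
  have hpi := Real.pi_pos
  have hcont : Continuous fun θ => (max 0 (Real.cos θ)) ^ 2 / (2 * c) := by fun_prop
  rw [setLIntegral_congr Ioo_ae_eq_Ioc, ← ofReal_integral_eq_lintegral_ofReal]
  · congr 1
    rw [← intervalIntegral.integral_of_le (by linarith)]
    have hi := fun a b => hcont.intervalIntegrable (μ := volume) a b
    rw [← intervalIntegral.integral_add_adjacent_intervals (hi (-Real.pi) (-(Real.pi/2))) (hi _ Real.pi),
      ← intervalIntegral.integral_add_adjacent_intervals (hi (-(Real.pi/2)) (Real.pi/2)) (hi _ Real.pi)]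
    have h1 : ∫ θ in (-Real.pi)..(-(Real.pi/2)), (max 0 (Real.cos θ)) ^ 2 / (2 * c) = 0 := by
      rw [intervalIntegral.integral_congr (g := fun _ => 0)]
      · simp
      · intro θ hθ
        rw [Set.uIcc_of_le (by linarith)] at hθ
        have : Real.cos θ ≤ 0 := by
          rw [← Real.cos_neg]
          exact Real.cos_nonpos_of_pi_div_two_le_of_le (by linarith [hθ.2]) (by linarith [hθ.1])
        simp [this]
    have h3 : ∫ θ in (Real.pi/2)..Real.pi, (max 0 (Real.cos θ)) ^ 2 / (2 * c) = 0 := by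
      rw [intervalIntegral.integral_congr (g := fun _ => 0)]
      · simp
      · intro θ hθ
        rw [Set.uIcc_of_le (by linarith)] at hθ
        have : Real.cos θ ≤ 0 :=
          Real.cos_nonpos_of_pi_div_two_le_of_le (by linarith [hθ.1]) (by linarith [hθ.2])
        simp [this]
    have h2 : ∫ θ in (-(Real.pi/2))..(Real.pi/2), (max 0 (Real.cos θ)) ^ 2 / (2 * c) =
        Real.pi / (4 * c) := by
      rw [intervalIntegral.integral_congr (g := fun θ => Real.cos θ ^ 2 / (2 * c))]
      · rw [intervalIntegral.integral_div, integral_cos_sq]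
        simp; field_simp; norm_num
      · intro θ hθ
        rw [Set.uIcc_of_le (by linarith)] at hθ
        have := Real.cos_nonneg_of_neg_pi_div_two_le_of_le hθ.1 hθ.2
        simp [this]
    rw [h1, h2, h3]; simp
  · exact hcont.integrableOn_Ioc
  · exact .of_forall fun θ => by simp only [Pi.zero_apply]; positivity

/-- The layer-cake form of the Ahlfors-Beurling estimate: the positive part of `Re (1 / w) - c`
lives on the disc with diameter `[0, 1 / c]`, and in polar coordinates its integral is
`∫ (cos θ)₊² / (2c) dθ = π / (4c)`. -/
lemma lint_cauchy {c : ℝ} (hc : 0 < c) :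
    ∫⁻ w : ℂ, ENNReal.ofReal ((w⁻¹).re - c) ≤ ENNReal.ofReal (Real.pi / (4 * c)) := by
  rw [← Complex.lintegral_comp_polarCoord_symm]
  have htar : polarCoord.target = Set.Ioi (0:ℝ) ×ˢ Set.Ioo (-Real.pi) Real.pi := rfl
  have hcongr : ∀ p ∈ Set.Ioi (0:ℝ) ×ˢ Set.Ioo (-Real.pi) Real.pi,
      ENNReal.ofReal p.1 • ENNReal.ofReal (((Complex.polarCoord.symm p)⁻¹).re - c) =
        ENNReal.ofReal (Real.cos p.2 - c * p.1) := by
    rintro ⟨r, θ⟩ ⟨hr, -⟩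
    have hr : 0 < r := hr
    rw [smul_eq_mul, ← ENNReal.ofReal_mul hr.le]
    congr 1
    have : (Complex.polarCoord.symm (r, θ))⁻¹ = ((r⁻¹ : ℝ) : ℂ) * exp ((-θ : ℝ) * I) := by
      rw [Complex.polarCoord_symm_apply]
      simp only [ofReal_cos, ofReal_sin, ← exp_mul_I, mul_inv, ofReal_neg, neg_mul, exp_neg, ofReal_inv]
    rw [this, re_ofReal_mul, exp_ofReal_mul_I_re, Real.cos_neg]
    field_simp
  rw [htar, setLIntegral_congr_fun (measurableSet_Ioi.prod measurableSet_Ioo) hcongr,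
    Measure.volume_eq_prod, ← Measure.prod_restrict, lintegral_prod_symm _ (by fun_prop)]
  calc _ ≤ ∫⁻ θ in Set.Ioo (-Real.pi) Real.pi,
        ENNReal.ofReal ((max 0 (Real.cos θ)) ^ 2 / (2 * c)) := lintegral_mono fun θ => lint_inner hc
    _ = _ := lint_outer hc

/-- `lint_cauchy` after a translation by `z` and a rotation by `u`. -/
lemma lint_cauchy' {c : ℝ} (hc : 0 < c) {u : ℂ} (hu : ‖u‖ = 1) (z : ℂ) :
    ∫⁻ w : ℂ, ENNReal.ofReal ((u * (z - w)⁻¹).re - c) ≤ ENNReal.ofReal (Real.pi / (4 * c)) := by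
  rw [lintegral_sub_left_eq_self (fun w => ENNReal.ofReal ((u * w⁻¹).re - c)) z]
  have hu0 : u ≠ 0 := by rintro rfl; simp at hu
  let v : Circle := ⟨u, by simpa [Submonoid.unitSphere] using hu⟩
  have hv : (v : ℂ) = u := rfl
  rw [← (rotation v).measurePreserving.lintegral_comp (by fun_prop)]
  simp only [rotation_apply, hv, mul_inv, ← mul_assoc, mul_inv_cancel₀ hu0, one_mul]
  exact lint_cauchy hc

/-- The Ahlfors-Beurling estimate for the Cauchy transform of a set of finite area, with the sharp
constant. After rotating the transform to be a positive real, bound the integrand by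
`c + (Re - c)₊` and choose `c` optimally. No measurability or integrability is needed: without
integrability the left-hand side is the junk value `0`. -/
lemma ahlfors_beurling {E : Set ℂ} (hfin : volume E ≠ ⊤) (z : ℂ) :
    ‖∫ w in E, (z - w)⁻¹‖ ^ 2 ≤ Real.pi * volume.real E := by
  set A := volume.real E with hA
  have hA0 : 0 ≤ A := measureReal_nonneg
  set J := ∫ w in E, (z - w)⁻¹ with hJ
  by_cases hi : IntegrableOn (fun w => (z - w)⁻¹) E
  swap
  · have : J = 0 := integral_undef hi
    rw [this]; simp; positivity
  have key : ∀ c : ℝ, 0 < c → ‖J‖ ≤ c * A + Real.pi / (4 * c) := by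
    intro c hc
    by_cases hJ0 : J = 0
    · rw [hJ0, norm_zero]; have := Real.pi_pos; positivity
    have hJn : (‖J‖ : ℂ) ≠ 0 := by simpa using hJ0
    obtain ⟨u, hu, huJ⟩ : ∃ u : ℂ, ‖u‖ = 1 ∧ u * J = ‖J‖ := by
      refine ⟨‖J‖ / J, by simp [hJ0], ?_⟩
      field_simp
    have hi' : IntegrableOn (fun w => u * (z - w)⁻¹) E := hi.const_mul u
    have h1 : ‖J‖ = ∫ w in E, (u * (z - w)⁻¹).re := by
      have := integral_re hi'
      simp only [RCLike.re_eq_complex_re] at this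
      rw [this, integral_const_mul, ← hJ, huJ, ofReal_re]
    have hre : IntegrableOn (fun w => (u * (z - w)⁻¹).re) E := hi'.re
    have hcI : IntegrableOn (fun _ : ℂ => c) E := integrableOn_const hfin
    have hpos : IntegrableOn (fun w => max ((u * (z - w)⁻¹).re - c) 0) E :=
      (hre.sub hcI).pos_part
    have h2 : ‖J‖ ≤ ∫ w in E, (c + max ((u * (z - w)⁻¹).re - c) 0) := by
      rw [h1]
      apply integral_mono hre (hcI.add hpos)
      intro w
      have := le_max_left ((u * (z - w)⁻¹).re - c) 0
      change (u * (z - w)⁻¹).re ≤ c + max ((u * (z - w)⁻¹).re - c) 0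
      linarith
    rw [integral_add hcI hpos] at h2
    have h3 : ∫ w in E, max ((u * (z - w)⁻¹).re - c) 0 ≤ Real.pi / (4 * c) := by
      rw [integral_eq_lintegral_of_nonneg_ae (f := fun w => max ((u * (z - w)⁻¹).re - c) 0)
        (.of_forall fun w => le_max_right _ _) hpos.aestronglyMeasurable]
      apply ENNReal.toReal_le_of_le_ofReal (by have := Real.pi_pos; positivity)
      refine le_trans ?_ (lint_cauchy' hc hu z)
      refine le_trans (setLIntegral_le_lintegral _ _) (lintegral_mono fun w => ?_)
      simp [ENNReal.ofReal_max]
    have h4 : ∫ w in E, c = c * A := by simp [hA, mul_comm]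
    linarith
  have hpi := Real.pi_pos
  rcases hA0.eq_or_lt with h0 | h0
  · rw [← h0] at key ⊢
    have : ‖J‖ ≤ 0 := by
      apply le_of_forall_pos_le_add
      intro ε hε
      refine (key (Real.pi / (4 * ε)) (by positivity)).trans (le_of_eq ?_)
      field_simp; ring
    have : ‖J‖ = 0 := le_antisymm this (norm_nonneg _)
    rw [this]; simp
  -- This value of `c` minimises `c * A + π / (4 * c)`.
  · have h5 := key (Real.sqrt (Real.pi / (4 * A))) (by positivity)
    have h6 : Real.sqrt (Real.pi / (4 * A)) * A + Real.pi / (4 * Real.sqrt (Real.pi / (4 * A))) =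
        Real.sqrt (Real.pi * A) := by
      have h7 : Real.sqrt (Real.pi / (4 * A)) = Real.sqrt (Real.pi * A) / (2 * A) := by
        rw [show Real.pi / (4 * A) = (Real.pi * A) / (2 * A) ^ 2 by field_simp; norm_num,
          Real.sqrt_div' _ (by positivity), Real.sqrt_sq (by positivity)]
      have h8 : 0 < Real.sqrt (Real.pi * A) := by positivity
      have h9 := Real.sq_sqrt (show 0 ≤ Real.pi * A by positivity)
      rw [h7]
      field_simp
      rw [h9]; ring
    rw [h6] at h5
    calc ‖J‖ ^ 2 ≤ Real.sqrt (Real.pi * A) ^ 2 := by gcongr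
      _ = _ := Real.sq_sqrt (by positivity)

/-! ### Area bounds by duality and a logarithmic cutoff -/

lemma integrableOn_inv_ball (R : ℝ) : IntegrableOn (fun z : ℂ => z⁻¹) (Metric.ball 0 R) := by
  have h : IntegrableOn (fun z : ℂ => ‖z‖⁻¹) (Metric.ball 0 R) := by
    rw [integrableOn_fun_norm_addHaar volume (f := fun y => y⁻¹)]
    have h1 : IntegrableOn (fun _ : ℝ => (1:ℝ)) (Set.Ioo 0 R) := integrableOn_const (by simp)
    refine h1.congr_fun ?_ measurableSet_Ioo
    intro y hy
    have : y ≠ 0 := hy.1.ne'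
    simp [Complex.finrank_real_complex, this]
  refine h.mono' (by fun_prop) (.of_forall fun z => by simp)

lemma integrable_div_sub {D : ℂ → ℂ} (hD : Continuous D) (hc : HasCompactSupport D) (w : ℂ) :
    Integrable fun z => D z / (z - w) := by
  have hloc : LocallyIntegrable fun z : ℂ => (z - w)⁻¹ := by
    have h0 : LocallyIntegrable fun z : ℂ => z⁻¹ := by
      intro z
      exact ⟨Metric.ball 0 (‖z‖ + 1), Metric.isOpen_ball.mem_nhds (by simp),
        integrableOn_inv_ball _⟩
    rw [locallyIntegrable_iff] at h0 ⊢
    intro K hK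
    have h1 := h0 _ (hK.image (f := fun z => z - w) (by fun_prop))
    rw [← (measurePreserving_sub_right volume w).integrableOn_comp_preimage
      (MeasurableEquiv.subRight w).measurableEmbedding] at h1
    exact h1.mono_set (Set.subset_preimage_image _ _)
  simpa [div_eq_mul_inv] using hloc.integrable_smul_left_of_hasCompactSupport hD hc

/-- Absolute integrability of the double integral in `duality`, which permits the use of Fubini.
On bounded sets the kernel is a truncation of `1 / z`, so this is a convolution integrand. -/
lemma integrable_kernel {D : ℂ → ℂ} (hD : Continuous D) (hc : HasCompactSupport D)
    {E : Set ℂ} (hE : MeasurableSet E) (hb : Bornology.IsBounded E) :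
    Integrable (fun p : ℂ × ℂ => D p.2 / (p.2 - p.1)) ((volume.restrict E).prod volume) := by
  obtain ⟨R, hR⟩ := hc.isCompact.isBounded.exists_norm_le
  obtain ⟨S, hS⟩ := hb.exists_norm_le
  set κ : ℂ → ℂ := (Metric.ball 0 (R + S + 1)).indicator fun z => z⁻¹
  have hκ : Integrable κ :=
    (integrable_indicator_iff Metric.isOpen_ball.measurableSet).2 (integrableOn_inv_ball _)
  have hDi : Integrable D := hD.integrable_of_hasCompactSupport hc
  have h1 := (hDi.convolution_integrand (ContinuousLinearMap.mul ℝ ℂ) hκ).neg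
  have h2 : (volume.restrict E).prod (volume : Measure ℂ) =
      ((volume : Measure ℂ).prod volume).restrict (E ×ˢ Set.univ) := by
    rw [← Measure.prod_restrict, Measure.restrict_univ]
  rw [h2]
  refine IntegrableOn.congr_fun (h1.integrableOn) ?_ (hE.prod .univ)
  rintro ⟨w, z⟩ ⟨hw, -⟩
  by_cases hz : D z = 0
  · simp [hz]
  have hzR := hR z (subset_tsupport _ hz)
  have hwS := hS w hw
  have : w - z ∈ Metric.ball (0:ℂ) (R + S + 1) := by
    rw [mem_ball_zero_iff]
    linarith [norm_sub_le w z]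
  simp only [Pi.neg_apply, κ, ContinuousLinearMap.mul_apply', Set.indicator_of_mem this]
  rw [← neg_sub z w, inv_neg, div_eq_mul_inv]
  ring

/-- If `g` is equal to a constant `N` on `E`, then the `L¹` norm of its `∂̄`-derivative is bounded
below in terms of the area of `E`: integrate the Cauchy-Pompeiu formula over `E`, exchange the
integrals, and apply the Ahlfors-Beurling estimate to the inner one. -/
lemma duality {g : ℂ → ℂ} (hg : ContDiff ℝ 1 g) (hc : HasCompactSupport g) {E : Set ℂ}
    (hE : MeasurableSet E) (hb : Bornology.IsBounded E) {N : ℝ} (hN : ∀ w ∈ E, g w = N) :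
    4 * Real.pi * N ^ 2 * volume.real E ≤
      (∫ z, ‖fderiv ℝ g z 1 + I * fderiv ℝ g z I‖) ^ 2 := by
  set D : ℂ → ℂ := fun z => fderiv ℝ g z 1 + I * fderiv ℝ g z I with hDdef
  have hfc : Continuous (fderiv ℝ g) := hg.continuous_fderiv one_ne_zero
  have hD : Continuous D := by fun_prop
  have hDc : HasCompactSupport D := by
    refine (hc.fderiv ℝ).mono ?_
    intro z hz h
    apply hz
    simp [hDdef, h]
  have hDi : Integrable D := hD.integrable_of_hasCompactSupport hDc
  set A := volume.real E with hA
  have hA0 : 0 ≤ A := measureReal_nonneg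
  have hfin : volume E ≠ ⊤ := hb.measure_lt_top.ne
  have h1 : ∫ w in E, ∫ z, D z / (z - w) = -(2 * Real.pi * N * A : ℝ) := by
    rw [setIntegral_congr_fun (g := fun _ => ((-(2 * Real.pi) * N : ℝ) : ℂ)) hE]
    · simp [← hA]; ring
    · intro w hw
      simp only [hDdef]
      rw [pompeiu hg hc, hN w hw]
      push_cast; ring
  have hker := integrable_kernel hD hDc hE hb
  rw [integral_integral_swap hker] at h1
  have h2 : ∀ z, ∫ w in E, D z / (z - w) = D z * ∫ w in E, (z - w)⁻¹ := by
    intro z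
    simp only [div_eq_mul_inv]
    rw [integral_const_mul]
  have h3 : ‖(-(2 * Real.pi * N * A : ℝ) : ℂ)‖ ≤ ∫ z, ‖D z‖ * Real.sqrt (Real.pi * A) := by
    rw [← h1]
    refine norm_integral_le_of_norm_le (hDi.norm.mul_const _) (.of_forall fun z => ?_)
    rw [h2, norm_mul]
    gcongr
    exact Real.le_sqrt_of_sq_le (ahlfors_beurling hfin z)
  rw [integral_mul_const, norm_neg, norm_real, Real.norm_eq_abs] at h3
  have h4 : (2 * Real.pi * N * A) ^ 2 ≤ (∫ z, ‖D z‖) ^ 2 * (Real.pi * A) := by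
    rw [← sq_abs]
    calc _ ≤ ((∫ z, ‖D z‖) * Real.sqrt (Real.pi * A)) ^ 2 := by gcongr
      _ = _ := by rw [mul_pow, Real.sq_sqrt (by have := Real.pi_pos; positivity)]
  rcases hA0.eq_or_lt with h0 | h0
  · rw [← h0]; simp; positivity
  · have hp : 0 < Real.pi * A := mul_pos Real.pi_pos h0
    refine le_of_mul_le_mul_right ?_ hp
    nlinarith

/-- The Cauchy-Schwarz inequality for a function supported in `T`. -/
lemma sq_integral_norm_le {D : ℂ → ℂ} (hD : Continuous D) (hc : HasCompactSupport D)
    {T : Set ℂ} (hT : MeasurableSet T) (hfin : volume T ≠ ⊤) (h0 : ∀ z ∉ T, D z = 0) :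
    (∫ z, ‖D z‖) ^ 2 ≤ volume.real T * ∫ z, ‖D z‖ ^ 2 := by
  have hi1 : Integrable fun z => ‖D z‖ := (hD.integrable_of_hasCompactSupport hc).norm
  have hi2 : Integrable fun z => ‖D z‖ ^ 2 := by
    apply Continuous.integrable_of_hasCompactSupport (by fun_prop)
    refine hc.mono ?_
    intro z hz h
    apply hz; simp [h]
  have hi3 : Integrable (T.indicator fun _ => (1:ℝ)) :=
    (integrable_indicator_iff hT).2 (integrableOn_const hfin)
  have key : ∀ x : ℝ, 0 ≤ volume.real T * (x * x) + (-2 * ∫ z, ‖D z‖) * x + ∫ z, ‖D z‖ ^ 2 := by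
    intro x
    have h1 : 0 ≤ ∫ z, (T.indicator (fun _ => (1:ℝ)) z * (x * x) + ‖D z‖ * (-2 * x) + ‖D z‖ ^ 2) := by
      apply integral_nonneg
      intro z
      by_cases hz : z ∈ T
      · simp only [Set.indicator_of_mem hz, Pi.zero_apply]; nlinarith [sq_nonneg (x - ‖D z‖)]
      · simp [Set.indicator_of_notMem hz, h0 z hz]
    rw [integral_add (f := fun z => T.indicator (fun _ => (1:ℝ)) z * (x * x) + ‖D z‖ * (-2 * x))
        ((hi3.mul_const _).add (hi1.mul_const _)) hi2,
      integral_add (hi3.mul_const _) (hi1.mul_const _), integral_mul_const, integral_mul_const,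
      integral_indicator hT] at h1
    simp at h1
    linarith
  -- `key` is the nonnegativity of `∫_T (x - ‖D‖)²` as a quadratic polynomial in `x`.
  have := discrim_le_zero key
  rw [discrim] at this
  nlinarith

/-- A continuous approximation from below of `x ↦ 1 / x`, supported in `(p, q)`, with at least the
integral of `1 / x` over `[p', q']`. -/
lemma exists_cutoff {p p' q' q : ℝ} (hp : 0 < p) (h1 : p < p') (h2 : p' < q') (h3 : q' < q) :
    ∃ h : ℝ → ℝ, Continuous h ∧ (∀ x, 0 ≤ h x) ∧ (∀ x, x * h x ≤ 1) ∧
      (∀ x, x ∉ Set.Ioo p q → h x = 0) ∧ Real.log (q' / p') ≤ ∫ x in p..q, h x := by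
  obtain ⟨ψ, hψ0, hψ1, hψ⟩ := exists_continuous_zero_one_of_isClosed
    (s := (Set.Ioo p q)ᶜ) (t := Set.Icc p' q') isOpen_Ioo.isClosed_compl isClosed_Icc (by
      rw [Set.disjoint_compl_left_iff_subset]
      exact fun x hx => ⟨h1.trans_le hx.1, hx.2.trans_lt h3⟩)
  set h : ℝ → ℝ := fun x => ψ x / max x p with hh
  have hmax : ∀ x, 0 < max x p := fun x => hp.trans_le (le_max_right _ _)
  have hc : Continuous h := by
    refine ψ.continuous.div (by fun_prop) fun x => (hmax x).ne'
  have hn : ∀ x, 0 ≤ h x := fun x => div_nonneg (hψ x).1 (hmax x).le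
  refine ⟨h, hc, hn, ?_, ?_, ?_⟩
  · intro x
    rw [hh, ← mul_div_assoc, div_le_one (hmax x)]
    rcases le_or_gt x 0 with hx | hx
    · exact (mul_nonpos_of_nonpos_of_nonneg hx (hψ x).1).trans (hmax x).le
    · exact (mul_le_of_le_one_right hx.le (hψ x).2).trans (le_max_left _ _)
  · intro x hx
    simp [hh, hψ0 hx]
  · have hp' : 0 < p' := hp.trans h1
    rw [← integral_one_div_of_pos hp' (hp'.trans h2)]
    calc ∫ x in p'..q', 1 / x = ∫ x in p'..q', h x := by
          apply intervalIntegral.integral_congr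
          intro x hx
          rw [Set.uIcc_of_le h2.le] at hx
          have h4 : ψ x = 1 := hψ1 hx
          have h5 : max x p = x := max_eq_left (h1.le.trans hx.1)
          simp only [hh, h4, h5]
      _ ≤ ∫ x in p..q, h x := by
          apply intervalIntegral.integral_mono_interval h1.le h2.le h3.le
          · exact .of_forall fun x => hn x
          · exact hc.intervalIntegrable _ _

/-! ### Growth from a difference inequality -/

/-- Integration of the difference inequality: in the variable `x = log t` it says
`A(eʸ) (1 + 2 (x - y) / d) ≤ A(eˣ)`, so dividing `[y, x]` into `n` equal steps gives the factor
`(1 + 2 (x - y) / (d n)) ^ n`, which tends to `exp (2 (x - y) / d)`. Finally `x` tends to `0`. -/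
lemma growth {A : ℝ → ℝ} {d M : ℝ} (hd : 0 < d) (hM : ∀ t, A t ≤ M)
    (h : ∀ s t, 0 < s → s < t → t < 1 → A s * (2 * Real.log (t / s)) ≤ d * (A t - A s))
    {t : ℝ} (ht0 : 0 < t) (ht1 : t < 1) : A t ≤ M * t ^ (2 / d) := by
  have step : ∀ y x : ℝ, y < x → x < 0 →
      A (Real.exp y) * (1 + 2 / d * (x - y)) ≤ A (Real.exp x) := by
    intro y x hyx hx
    have := h (Real.exp y) (Real.exp x) (Real.exp_pos _) (Real.exp_lt_exp.2 hyx)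
      (Real.exp_lt_one_iff.2 hx)
    rw [← Real.exp_sub, Real.log_exp] at this
    have h2 : A (Real.exp y) * (1 + 2 / d * (x - y)) =
        A (Real.exp y) + (A (Real.exp y) * (2 * (x - y))) / d := by field_simp
    rw [h2]
    have h3 := (div_le_iff₀' hd).2 this
    linarith
  have hexp : ∀ y x : ℝ, y < x → x < 0 → A (Real.exp y) * Real.exp (2 / d * (x - y)) ≤ M := by
    intro y x hyx hx
    have hn : ∀ n : ℕ, 0 < n → A (Real.exp y) * (1 + (2 / d * (x - y)) / n) ^ n ≤ M := by
      intro n hn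
      have hn' : (0:ℝ) < n := by exact_mod_cast hn
      have hk : ∀ k : ℕ, k ≤ n → A (Real.exp y) * (1 + (2 / d * (x - y)) / n) ^ k ≤
          A (Real.exp (y + k * ((x - y) / n))) := by
        intro k
        induction k with
        | zero => intro _; simp
        | succ k ih =>
          intro hk
          have ih := ih (by omega)
          have hδ : 0 < (x - y) / n := div_pos (by linarith) hn'
          have hkx : y + ((k + 1 : ℕ) : ℝ) * ((x - y) / n) ≤ x := by
            have : ((k + 1 : ℕ) : ℝ) ≤ n := by exact_mod_cast hk
            calc _ ≤ y + n * ((x - y) / n) := by gcongr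
              _ = x := by field_simp; ring
          have := step (y + k * ((x - y) / n)) (y + ((k + 1 : ℕ) : ℝ) * ((x - y) / n))
            (by push_cast; linarith) (by linarith)
          refine le_trans ?_ this
          rw [pow_succ, ← mul_assoc]
          have h5 : 1 + 2 / d * (y + ((k + 1 : ℕ) : ℝ) * ((x - y) / n) - (y + k * ((x - y) / n))) =
              1 + (2 / d * (x - y)) / n := by push_cast; ring
          rw [h5]
          have : 0 ≤ 1 + (2 / d * (x - y)) / n := by
            have : 0 < x - y := by linarith
            positivity
          gcongr
      exact (hk n le_rfl).trans (hM _)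
    refine le_of_tendsto ((Real.tendsto_one_add_div_pow_exp (2 / d * (x - y))).const_mul _) ?_
    filter_upwards [Filter.eventually_gt_atTop 0] with n h using hn n h
  have hy : Real.log t < 0 := Real.log_neg ht0 ht1
  have hlim : A (Real.exp (Real.log t)) * Real.exp (2 / d * (0 - Real.log t)) ≤ M := by
    have hcont : Filter.Tendsto (fun x => A (Real.exp (Real.log t)) *
        Real.exp (2 / d * (x - Real.log t))) (nhdsWithin 0 (Set.Iio 0))
        (nhds (A (Real.exp (Real.log t)) * Real.exp (2 / d * (0 - Real.log t)))) := by
      apply Filter.Tendsto.mono_left _ nhdsWithin_le_nhds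
      exact Continuous.tendsto (by fun_prop) 0
    refine le_of_tendsto hcont ?_
    filter_upwards [Ioo_mem_nhdsLT hy] with x hx using hexp _ _ hx.1 hx.2
  rw [Real.exp_log ht0] at hlim
  rw [Real.rpow_def_of_pos ht0]
  have h6 : Real.exp (2 / d * (0 - Real.log t)) * Real.exp (Real.log t * (2 / d)) = 1 := by
    rw [← Real.exp_add, ← Real.exp_zero]; congr 1; ring
  calc A t = A t * Real.exp (2 / d * (0 - Real.log t)) * Real.exp (Real.log t * (2 / d)) := by
        rw [mul_assoc, h6, mul_one]
    _ ≤ _ := by gcongr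

/-! ### Blaschke products and their logarithmic derivative -/

/-- The finite Blaschke product with zeros `a k`, without the unimodular constant, as a function on
the whole plane (it takes junk values at the poles, which lie outside the closed disc). -/
noncomputable def blaschke {d : ℕ} (a : Fin d → ℂ) (z : ℂ) : ℂ :=
  ∏ k, (z - a k) / (1 - z * conj (a k))

lemma one_sub_mul_conj_ne_zero {a z : ℂ} (ha : ‖a‖ < 1) (hz : ‖z‖ ≤ 1) : 1 - z * conj a ≠ 0 := by
  intro h
  have h1 : ‖z * conj a‖ = 1 := by rw [← sub_eq_zero.1 h, norm_one]
  rw [norm_mul, RCLike.norm_conj] at h1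
  nlinarith [norm_nonneg a, norm_nonneg z]

lemma differentiableAt_blaschke {d : ℕ} {a : Fin d → ℂ} (ha : ∀ k, ‖a k‖ < 1) {z : ℂ}
    (hz : ‖z‖ ≤ 1) : DifferentiableAt ℂ (blaschke a) z := by
  unfold blaschke
  refine DifferentiableAt.fun_finsetProd fun k _ => ?_
  exact DifferentiableAt.div (by fun_prop) (by fun_prop) (one_sub_mul_conj_ne_zero (ha k) hz)

/-- On the unit circle `1 - z * conj a = z * conj (z - a)`, so every factor is unimodular. -/
lemma norm_blaschke_eq_one {d : ℕ} {a : Fin d → ℂ} (ha : ∀ k, ‖a k‖ < 1) {z : ℂ}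
    (hz : ‖z‖ = 1) : ‖blaschke a z‖ = 1 := by
  unfold blaschke
  rw [norm_prod]
  refine Finset.prod_eq_one fun k _ => ?_
  have h1 : z * conj z = 1 := by rw [mul_conj, normSq_eq_norm_sq, hz]; simp
  have h2 : 1 - z * conj (a k) = z * conj (z - a k) := by rw [map_sub, mul_sub, h1]
  have h3 := one_sub_mul_conj_ne_zero (ha k) hz.le
  rw [norm_div, div_eq_one_iff_eq (by simpa using h3), h2, norm_mul, hz, RCLike.norm_conj, one_mul]

lemma logDeriv_blaschke {d : ℕ} {a : Fin d → ℂ} (ha : ∀ k, ‖a k‖ < 1) {z : ℂ}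
    (hz : ‖z‖ ≤ 1) (hb : blaschke a z ≠ 0) :
    deriv (blaschke a) z / blaschke a z =
      ∑ k, (1 / (z - a k) + conj (a k) / (1 - z * conj (a k))) := by
  rw [blaschke, Finset.prod_ne_zero_iff] at hb
  have h1 := logDeriv_prod (s := Finset.univ) (f := fun k z => (z - a k) / (1 - z * conj (a k)))
    (x := z) hb fun k _ => DifferentiableAt.div (by fun_prop) (by fun_prop)
      (one_sub_mul_conj_ne_zero (ha k) hz)
  rw [← logDeriv_apply]
  refine h1.trans (Finset.sum_congr rfl fun k _ => ?_)
  have h2 := one_sub_mul_conj_ne_zero (ha k) hz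
  have h3 : z - a k ≠ 0 := fun h => hb k (Finset.mem_univ _) (by simp [h])
  rw [logDeriv_div z h3 h2 (by fun_prop) (by fun_prop), logDeriv_apply, logDeriv_apply]
  have h4 : deriv (fun z => z - a k) z = 1 := by simp
  have h5 : deriv (fun z => 1 - z * conj (a k)) z = - conj (a k) := by
    rw [deriv_const_sub, deriv_mul_const (by fun_prop)]; simp
  rw [h4, h5]; ring

/-! ### The cutoff of a Blaschke product -/

/-- The function `η (|b|²)` on the open unit disc, with `b` the Blaschke product, extended by zero to
the plane. For `η` vanishing on `[q, ∞)` with `q < 1` it vanishes near the unit circle, hence is as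
smooth as `η`. -/
noncomputable def bcut {d : ℕ} (a : Fin d → ℂ) (η : ℝ → ℝ) (z : ℂ) : ℂ :=
  open Classical in if ‖z‖ < 1 then ((η (normSq (blaschke a z)) : ℝ) : ℂ) else 0

section
variable {d : ℕ} {a : Fin d → ℂ} {η h : ℝ → ℝ} {q : ℝ}

lemma bcut_eventually_zero (ha : ∀ k, ‖a k‖ < 1) (hq : q < 1) (hη0 : ∀ x, q ≤ x → η x = 0)
    {z : ℂ} (hz : 1 ≤ ‖z‖) : bcut a η =ᶠ[nhds z] fun _ => 0 := by
  rcases hz.eq_or_lt with h1 | h1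
  · have hc : ContinuousAt (fun z => normSq (blaschke a z)) z :=
      continuous_normSq.continuousAt.comp (differentiableAt_blaschke ha h1.symm.le).continuousAt
    have h2 : q < normSq (blaschke a z) := by
      rw [normSq_eq_norm_sq, norm_blaschke_eq_one ha h1.symm]; simpa using hq
    filter_upwards [hc.eventually (lt_mem_nhds h2)] with y hy
    simp [bcut, hη0 _ hy.le]
  · filter_upwards [continuous_norm.continuousAt.eventually (lt_mem_nhds h1)] with y hy
    simp [bcut, not_lt.2 (le_of_lt hy)]

lemma bcut_eventually_eq {z : ℂ} (hz : ‖z‖ < 1) :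
    bcut a η =ᶠ[nhds z] fun z => ((η (normSq (blaschke a z)) : ℝ) : ℂ) := by
  filter_upwards [continuous_norm.continuousAt.eventually (gt_mem_nhds hz)] with y hy
  simp [bcut, hy]

lemma contDiff_bcut (ha : ∀ k, ‖a k‖ < 1) (hq : q < 1) (hη0 : ∀ x, q ≤ x → η x = 0)
    (hη : ContDiff ℝ 1 η) : ContDiff ℝ 1 (bcut a η) := by
  rw [contDiff_iff_contDiffAt]
  intro z
  rcases lt_or_ge ‖z‖ 1 with hz | hz
  · refine ContDiffAt.congr_of_eventuallyEq ?_ (bcut_eventually_eq hz)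
    have h1 : ContDiffAt ℂ 1 (blaschke a) z := by
      have : DifferentiableOn ℂ (blaschke a) (Metric.ball 0 1) := fun y hy =>
        (differentiableAt_blaschke ha (mem_ball_zero_iff.1 hy).le).differentiableWithinAt
      exact (this.analyticAt (Metric.isOpen_ball.mem_nhds (by simpa using hz))).contDiffAt
    have h2 : ContDiffAt ℝ 1 (blaschke a) z := h1.restrict_scalars ℝ
    have h3 : ContDiffAt ℝ 1 (fun z => normSq (blaschke a z)) z := by
      simp only [normSq_eq_norm_sq]; exact h2.norm_sq ℝ
    exact ofRealCLM.contDiff.contDiffAt.comp z (hη.contDiffAt.comp z h3)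
  · exact contDiffAt_const.congr_of_eventuallyEq (bcut_eventually_zero ha hq hη0 hz)

lemma hasCompactSupport_bcut : HasCompactSupport (bcut a η) := by
  refine HasCompactSupport.intro (isCompact_closedBall (0:ℂ) 1) fun z hz => ?_
  have : ¬ ‖z‖ < 1 := fun h => hz (by simpa using h.le)
  simp [bcut, this]

lemma dbar_bcut_of_one_le (ha : ∀ k, ‖a k‖ < 1) (hq : q < 1) (hη0 : ∀ x, q ≤ x → η x = 0)
    {z : ℂ} (hz : 1 ≤ ‖z‖) :
    fderiv ℝ (bcut a η) z 1 + I * fderiv ℝ (bcut a η) z I = 0 := by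
  rw [(bcut_eventually_zero ha hq hη0 hz).fderiv_eq]; simp

/-- The chain rule `∂̄ (η (|b|²)) = 2 η'(|b|²) b conj b'`, for holomorphic `b` and `η' = -h`. -/
lemma dbar_bcut (ha : ∀ k, ‖a k‖ < 1) (hη : ∀ x, HasDerivAt η (- h x) x)
    {z : ℂ} (hz : ‖z‖ < 1) :
    fderiv ℝ (bcut a η) z 1 + I * fderiv ℝ (bcut a η) z I =
      -2 * h (normSq (blaschke a z)) * (blaschke a z * conj (deriv (blaschke a) z)) := by
  rw [(bcut_eventually_eq hz).fderiv_eq]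
  set b := blaschke a z
  set b' := deriv (blaschke a) z
  have hb : HasDerivAt (blaschke a) b' z := (differentiableAt_blaschke ha hz.le).hasDerivAt
  have hdir : ∀ v : ℂ, fderiv ℝ (fun z => ((η (normSq (blaschke a z)) : ℝ) : ℂ)) z v =
      ((-h (normSq b) * (2 * (conj b * (b' * v)).re) : ℝ) : ℂ) := by
    intro v
    have h1 : HasFDerivAt (blaschke a)
        ((ContinuousLinearMap.toSpanSingleton ℂ b').restrictScalars ℝ) z :=
      hb.hasFDerivAt.restrictScalars ℝ
    have h2 := h1.norm_sq
    have hn : (fun z => ‖blaschke a z‖ ^ 2) = fun z => normSq (blaschke a z) :=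
      funext fun z => (normSq_eq_norm_sq _).symm
    have h3 := h2
    rw [hn] at h3
    have h4 := (hη (normSq b)).comp_hasFDerivAt z h3
    have h5 := (ofRealCLM.hasFDerivAt (x := (η ∘ fun z => normSq (blaschke a z)) z)).comp z h4
    have h6 := h5.fderiv
    change fderiv ℝ (ofRealCLM ∘ (η ∘ fun z => normSq (blaschke a z))) z v = _
    rw [h6]
    simp [Complex.inner, b]
    ring
  rw [hdir, hdir]
  apply Complex.ext <;> simp <;> ring

end

/-! ### Sublevel sets, the energy bound and the conclusion -/

/-- The part of the open unit disc where the Blaschke product has modulus less than `t`. -/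
def sublevel {d : ℕ} (a : Fin d → ℂ) (t : ℝ) : Set ℂ := {z | ‖z‖ < 1 ∧ ‖blaschke a z‖ < t}

lemma isOpen_sublevel {d : ℕ} {a : Fin d → ℂ} (ha : ∀ k, ‖a k‖ < 1) (t : ℝ) :
    IsOpen (sublevel a t) := by
  rw [isOpen_iff_mem_nhds]
  rintro z ⟨h1, h2⟩
  filter_upwards [continuous_norm.continuousAt.eventually (gt_mem_nhds h1),
    (differentiableAt_blaschke ha h1.le).continuousAt.norm.eventually (gt_mem_nhds h2)]
    with y hy1 hy2 using ⟨hy1, hy2⟩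

lemma sublevel_subset {d : ℕ} (a : Fin d → ℂ) (t : ℝ) : sublevel a t ⊆ Metric.ball 0 1 :=
  fun z hz => by simpa using hz.1

/-- The Dirichlet-type energy of the cutoff. The zeros of the Blaschke product and their reflections
in the circle are the poles of its logarithmic derivative; the Cauchy-Pompeiu formula at the former
gives `N` each and at the latter gives `0`. -/
lemma energy_le {d : ℕ} {a : Fin d → ℂ} (ha : ∀ k, ‖a k‖ < 1) {η h : ℝ → ℝ} {q N : ℝ}
    (hq : q < 1) (hη0 : ∀ x, q ≤ x → η x = 0)
    (hη : ∀ x, HasDerivAt η (- h x) x) (hηc : ContDiff ℝ 1 η)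
    (hh0 : ∀ x, 0 ≤ h x) (hh1 : ∀ x, x * h x ≤ 1) (hN : η 0 = N) :
    ∫ z, ‖fderiv ℝ (bcut a η) z 1 + I * fderiv ℝ (bcut a η) z I‖ ^ 2 ≤ 4 * Real.pi * d * N := by
  have hg := contDiff_bcut ha hq hη0 hηc
  have hc : HasCompactSupport (bcut a η) := hasCompactSupport_bcut
  have hfc : Continuous (fderiv ℝ (bcut a η)) := hg.continuous_fderiv one_ne_zero
  set D : ℂ → ℂ := fun z => fderiv ℝ (bcut a η) z 1 + I * fderiv ℝ (bcut a η) z I with hDdef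
  have hD : Continuous D := by fun_prop
  have hDc : HasCompactSupport D := by
    refine (hc.fderiv ℝ).mono ?_
    intro z hz h
    apply hz
    simp [hDdef, h]
  -- `S` is `D` times the logarithmic derivative of the Blaschke product, in partial fractions.
  set S : ℂ → ℂ := fun z => ∑ k, (D z / (z - a k) + D z * (conj (a k) / (1 - z * conj (a k))))
    with hS
  have hterm : ∀ k, Integrable (fun z => D z * (conj (a k) / (1 - z * conj (a k)))) ∧
      ∫ z, D z * (conj (a k) / (1 - z * conj (a k))) = 0 := by
    intro k
    -- For `a k ≠ 0` the kernel is a Cauchy kernel at the reflected point `(conj (a k))⁻¹`, where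
    -- the cutoff vanishes.
    by_cases hk : a k = 0
    · simp [hk]
    have hk' : conj (a k) ≠ 0 := by simpa using hk
    have h1 : (fun z => D z * (conj (a k) / (1 - z * conj (a k)))) =
        fun z => -(D z / (z - (conj (a k))⁻¹)) := by
      ext z
      have : 1 - z * conj (a k) = -(z - (conj (a k))⁻¹) * conj (a k) := by
        field_simp; ring
      rw [this, div_mul_cancel_right₀ hk', inv_neg, div_eq_mul_inv]; ring
    rw [h1]
    refine ⟨(integrable_div_sub hD hDc _).neg, ?_⟩
    rw [integral_neg, pompeiu hg hc]
    have : ¬ ‖(conj (a k))⁻¹‖ < 1 := by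
      rw [norm_inv, RCLike.norm_conj, not_lt]
      exact (one_le_inv₀ (norm_pos_iff.2 hk)).2 (ha k).le
    simp only [bcut, if_neg this]; simp
  have hint1 := fun k => integrable_div_sub hD hDc (a k)
  have hSi : Integrable S := integrable_finsetSum _ fun k _ => (hint1 k).add (hterm k).1
  have hSint : ∫ z, S z = -(2 * Real.pi * d * N : ℝ) := by
    rw [hS, integral_finsetSum (f := fun k z => D z / (z - a k) +
      D z * (conj (a k) / (1 - z * conj (a k)))) Finset.univ
      fun k _ => (hint1 k).add (hterm k).1]
    have : ∀ k, ∫ z, (D z / (z - a k) + D z * (conj (a k) / (1 - z * conj (a k)))) =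
        -(2 * Real.pi) * N := by
      intro k
      rw [integral_add (hint1 k) (hterm k).1, (hterm k).2, pompeiu hg hc, add_zero]
      have h0 : blaschke a (a k) = 0 := Finset.prod_eq_zero (Finset.mem_univ k) (by simp)
      simp [bcut, ha k, h0, hN]
    simp only [this]
    simp; ring
  have hpt : ∀ z, ‖D z‖ ^ 2 ≤ (-2 * S z).re := by
    intro z
    by_cases hD0 : D z = 0
    · simp [hS, hD0]
    have hz : ‖z‖ < 1 := by
      by_contra hz
      exact hD0 (dbar_bcut_of_one_le ha hq hη0 (not_lt.1 hz))
    have hDz : D z = _ := dbar_bcut ha hη hz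
    set b := blaschke a z with hb
    set b' := deriv (blaschke a) z with hb'
    have hb0 : b ≠ 0 := by
      intro h0; apply hD0; rw [hDz, h0]; simp
    have hSz : S z = D z * (b' / b) := by
      rw [hb, hb', logDeriv_blaschke ha hz.le hb0, Finset.mul_sum]
      refine Finset.sum_congr rfl fun k _ => ?_
      ring
    have h1 : -2 * S z = ((4 * h (normSq b) * normSq b' : ℝ) : ℂ) := by
      rw [hSz, hDz]
      push_cast
      rw [← mul_conj b']
      field_simp
      ring
    have h2 : ‖D z‖ ^ 2 = 4 * h (normSq b) ^ 2 * (normSq b * normSq b') := by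
      rw [hDz, ← normSq_eq_norm_sq]
      simp only [map_mul, normSq_conj, normSq_ofReal]
      rw [show normSq (-2 : ℂ) = 4 by norm_num [normSq]]
      ring
    rw [h1, ofReal_re, h2]
    have h3 : 0 ≤ 4 * h (normSq b) * normSq b' * (1 - normSq b * h (normSq b)) :=
      mul_nonneg (mul_nonneg (mul_nonneg (by norm_num) (hh0 _)) (normSq_nonneg _))
        (sub_nonneg.2 (hh1 _))
    nlinarith
  have hre : Integrable fun z => (-2 * S z).re := (hSi.const_mul (-2)).re
  calc ∫ z, ‖D z‖ ^ 2 ≤ ∫ z, (-2 * S z).re := by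
        refine integral_mono_of_nonneg (.of_forall fun z => by positivity) hre (.of_forall hpt)
    _ = (∫ z, -2 * S z).re := by
        have := integral_re (hSi.const_mul (-2))
        simpa using this
    _ = 4 * Real.pi * d * N := by
        rw [integral_const_mul, hSint, ← ofReal_neg,
          show (-2 : ℂ) = ((-2 : ℝ) : ℂ) by norm_num, ← ofReal_mul, ofReal_re]
        ring

/-- The area inequality between two levels, with the logarithm taken over a slightly smaller
interval `[p', q']` to leave room for a continuous cutoff. -/
lemma ring_step {d : ℕ} {a : Fin d → ℂ} (ha : ∀ k, ‖a k‖ < 1) {s t p' q' : ℝ} (hs : 0 < s)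
    (h1 : s ^ 2 < p') (h2 : p' < q') (h3 : q' < t ^ 2) (ht : 0 < t) (ht1 : t < 1) :
    volume.real (sublevel a s) * Real.log (q' / p') ≤
      d * (volume.real (sublevel a t) - volume.real (sublevel a s)) := by
  obtain ⟨h, hc, hh0, hh1, hsupp, hlog⟩ := exists_cutoff (by positivity : 0 < s ^ 2) h1 h2 h3
  have hst : s ^ 2 < t ^ 2 := h1.trans (h2.trans h3)
  have hst' : s < t := lt_of_pow_lt_pow_left₀ 2 ht.le hst
  set N := ∫ x in (s^2)..(t^2), h x with hNdef
  set η : ℝ → ℝ := fun x => ∫ y in x..(t^2), h y with hηdef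
  have hη : ∀ x, HasDerivAt η (- h x) x := fun x =>
    intervalIntegral.integral_hasDerivAt_left (hc.intervalIntegrable _ _)
      (hc.stronglyMeasurableAtFilter _ _) hc.continuousAt
  have hηc : ContDiff ℝ 1 η := by
    rw [contDiff_one_iff_deriv]
    refine ⟨fun x => (hη x).differentiableAt, ?_⟩
    have : deriv η = fun x => - h x := funext fun x => (hη x).deriv
    rw [this]; exact hc.neg
  have hη0 : ∀ x, t ^ 2 ≤ x → η x = 0 := by
    intro x hx
    simp only [hηdef]
    rw [intervalIntegral.integral_congr (g := fun _ => 0)]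
    · simp
    · intro y hy
      rw [Set.uIcc_of_ge hx] at hy
      exact hsupp y fun h' => absurd h'.2 (not_lt.2 hy.1)
  have hηN : ∀ x, x ≤ s ^ 2 → η x = N := by
    intro x hx
    simp only [hηdef]
    rw [← intervalIntegral.integral_add_adjacent_intervals (hc.intervalIntegrable x (s^2))
      (hc.intervalIntegrable _ _), ← hNdef,
      intervalIntegral.integral_congr (g := fun _ => 0)]
    · simp
    · intro y hy
      rw [Set.uIcc_of_le hx] at hy
      exact hsupp y fun h' => absurd h'.1 (not_lt.2 hy.2)
  have hq : t ^ 2 < 1 := by nlinarith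
  have hg := contDiff_bcut ha hq hη0 hηc
  have hcs : HasCompactSupport (bcut a η) := hasCompactSupport_bcut
  have hsub : sublevel a s ⊆ sublevel a t := fun z hz => ⟨hz.1, hz.2.trans hst'⟩
  have hfin : ∀ r, volume (sublevel a r) ≠ ⊤ := fun r =>
    ((measure_mono (sublevel_subset a r)).trans_lt measure_ball_lt_top).ne
  have hdual := duality hg hcs (isOpen_sublevel ha s).measurableSet
    (Metric.isBounded_ball.subset (sublevel_subset a s)) (N := N) (by
      rintro w ⟨hw1, hw2⟩
      have : normSq (blaschke a w) ≤ s ^ 2 := by rw [normSq_eq_norm_sq]; gcongr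
      simp [bcut, hw1, hηN _ this])
  have henergy := energy_le ha hq hη0 hη hηc hh0 hh1 (hηN 0 (by positivity))
  have hfc : Continuous (fderiv ℝ (bcut a η)) := hg.continuous_fderiv one_ne_zero
  have hCS := sq_integral_norm_le
    (D := fun z => fderiv ℝ (bcut a η) z 1 + I * fderiv ℝ (bcut a η) z I)
    (T := sublevel a t \ sublevel a s) (by fun_prop)
    (by
      refine (hcs.fderiv ℝ).mono ?_
      intro z hz h
      apply hz
      simp [h])
    ((isOpen_sublevel ha t).measurableSet.diff (isOpen_sublevel ha s).measurableSet)
    (measure_ne_top_of_subset Set.sdiff_subset (hfin t)) (by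
      intro z hz
      rcases lt_or_ge ‖z‖ 1 with hz1 | hz1
      · rw [dbar_bcut ha hη hz1, hsupp]
        · simp
        · rintro ⟨h4, h5⟩
          rw [normSq_eq_norm_sq] at h4 h5
          apply hz
          exact ⟨⟨hz1, lt_of_pow_lt_pow_left₀ 2 ht.le h5⟩, fun h6 =>
            absurd h4 (not_lt.2 (by have := h6.2; gcongr))⟩
      · exact dbar_bcut_of_one_le ha hq hη0 hz1)
  rw [measureReal_sdiff hsub (isOpen_sublevel ha s).measurableSet (hfin t)] at hCS
  set As := volume.real (sublevel a s)
  set At := volume.real (sublevel a t)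
  have hAs : 0 ≤ As := measureReal_nonneg
  have hV : 0 ≤ At - As := sub_nonneg.2 (measureReal_mono hsub (hfin t))
  have hNpos : 0 < N := by
    refine lt_of_lt_of_le (Real.log_pos ?_) hlog
    rw [one_lt_div (by nlinarith)]; exact h2
  have hfinal : 4 * Real.pi * N ^ 2 * As ≤ (At - As) * (4 * Real.pi * d * N) :=
    hdual.trans (hCS.trans (by gcongr))
  have h7 : As * N ≤ d * (At - As) := by
    have hp : 0 < 4 * Real.pi * N := by have := Real.pi_pos; positivity
    refine le_of_mul_le_mul_left ?_ hp
    nlinarith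
  exact le_trans (by gcongr) h7

/-- The area inequality between two levels, as the limit `ε → 0` of `ring_step` with
`p' = s² exp ε` and `q' = t² exp (-ε)`. -/
lemma ring_step' {d : ℕ} {a : Fin d → ℂ} (ha : ∀ k, ‖a k‖ < 1) {s t : ℝ} (hs : 0 < s)
    (hst : s < t) (ht1 : t < 1) :
    volume.real (sublevel a s) * (2 * Real.log (t / s)) ≤
      d * (volume.real (sublevel a t) - volume.real (sublevel a s)) := by
  have ht : 0 < t := hs.trans hst
  have hL : 0 < Real.log (t / s) := Real.log_pos ((one_lt_div hs).2 hst)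
  have hlim : Filter.Tendsto (fun ε => volume.real (sublevel a s) * (2 * Real.log (t / s) - 2 * ε))
      (nhdsWithin 0 (Set.Ioi 0))
      (nhds (volume.real (sublevel a s) * (2 * Real.log (t / s) - 2 * 0))) := by
    apply Filter.Tendsto.mono_left _ nhdsWithin_le_nhds
    exact Continuous.tendsto (by fun_prop) 0
  rw [mul_zero, sub_zero] at hlim
  refine le_of_tendsto hlim ?_
  filter_upwards [Ioo_mem_nhdsGT hL] with ε hε
  have he : 1 < Real.exp ε := Real.one_lt_exp_iff.2 hε.1
  have he' : Real.exp (-ε) < 1 := Real.exp_lt_one_iff.2 (by linarith [hε.1])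
  have hlog : Real.log ((t ^ 2 * Real.exp (-ε)) / (s ^ 2 * Real.exp ε)) =
      2 * Real.log (t / s) - 2 * ε := by
    rw [Real.log_div (by positivity) (by positivity), Real.log_mul (by positivity) (by positivity),
      Real.log_mul (by positivity) (by positivity), Real.log_div ht.ne' hs.ne', Real.log_exp,
      Real.log_exp, Real.log_pow, Real.log_pow]
    push_cast; ring
  have h2 : s ^ 2 * Real.exp ε < t ^ 2 * Real.exp (-ε) := by
    rw [← Real.log_lt_log_iff (by positivity) (by positivity), ← sub_pos,
      ← Real.log_div (by positivity) (by positivity), hlog]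
    linarith [hε.2]
  rw [← hlog]
  refine ring_step ha hs ?_ h2 ?_ ht ht1
  · exact lt_mul_of_one_lt_right (by positivity) he
  · exact mul_lt_of_lt_one_right (by positivity) he'

theorem blaschke_sublevel_area (d : ℕ) (hd : 0 < d) (s : ℝ) (a : Fin d → ℂ)
    (ha : ∀ k, ‖a k‖ < 1) (t : ℝ) (ht : t ∈ Set.Icc (0:ℝ) 1) :
    volume {z : ℂ | ‖z‖ < 1 ∧
        ‖Complex.exp (Complex.I * s) * ∏ k, (z - a k) / (1 - z * conj (a k))‖ < t} ≤
      ENNReal.ofReal (Real.pi * t ^ ((2:ℝ) / d)) := by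
  have hset : {z : ℂ | ‖z‖ < 1 ∧
      ‖Complex.exp (Complex.I * s) * ∏ k, (z - a k) / (1 - z * conj (a k))‖ < t} =
      sublevel a t := by
    ext z
    rw [Set.mem_ofPred_eq, norm_mul, mul_comm I, norm_exp_ofReal_mul_I, one_mul]
    rfl
  rw [hset]
  have hball : volume (Metric.ball (0:ℂ) 1) = ENNReal.ofReal Real.pi := by
    rw [Complex.volume_ball]; simp [ENNReal.ofReal_eq_coe_nnreal Real.pi_pos.le]; rfl
  have hle : ∀ r, volume (sublevel a r) ≤ ENNReal.ofReal Real.pi := fun r =>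
    hball ▸ measure_mono (sublevel_subset a r)
  rcases ht.1.eq_or_lt with h0 | h0
  · have : sublevel a t = ∅ := by
      ext z
      simp only [sublevel, Set.mem_ofPred_eq, Set.mem_empty_iff_false, iff_false, not_and, not_lt]
      intro _; rw [← h0]; exact norm_nonneg _
    simp [this]
  rcases ht.2.eq_or_lt with h1 | h1
  · simpa [h1] using hle 1
  · have hfin : volume (sublevel a t) ≠ ⊤ := ((hle t).trans_lt ENNReal.ofReal_lt_top).ne
    rw [← ofReal_measureReal hfin]
    refine ENNReal.ofReal_le_ofReal ?_
    exact growth (A := fun t => volume.real (sublevel a t)) (by exact_mod_cast hd)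
      (fun r => ENNReal.toReal_le_of_le_ofReal Real.pi_pos.le (hle r))
      (fun s t h1 h2 h3 => ring_step' ha h1 h2 h3) h0 h1
end

section
/- Let B be a finite Blaschke product of degree d, t ∈ (0,1), and suppose the level set {z ∈ 𝔻 : |B(z)| = t} is a circle {z : |z−z₀| = t^{1/d}} contained in 𝔻. Then z₀ = 0 and B(z) = c·z^d for some unimodular constant c. -/
/-!
Put `r = t ^ (1/d)` and let `D` be the closed disc bounded by the circle `|z - z₀| = r`; it lies in
the unit disc, so `|z₀| + r < 1`.

All zeros `a k` lie in the interior of `D`: on a ray leaving a zero outside `D` away from `z₀`, the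
modulus of `B` passes from `0` to `1` before the ray leaves the unit disc, hence takes the value `t`
off the circle (`zero_mem_disc`).

Reflecting the zeros in the circle, put `P(z) = ∏ (1 - (z - z₀) conj(a k - z₀) / r²)` and
`Q(z) = ∏ (1 - z conj(a k))`. Both are zero-free on `D`, and `|B| = t = r ^ d` on the circle says
`|P| = |Q|` there. By the maximum principle `P / Q` is a unimodular constant, so `P = c Q` as
polynomials (`reflected_eq_const_mul`); evaluating at `z₀` gives `|Q(z₀)| = 1`.

Comparing roots (and degrees, for the root at infinity), every `a j` equals `ψ (a k)` for some `k`,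
where `ψ(b) = z₀ + r² b / (1 - b conj z₀)` is the composition of the reflections in the two circles
(`exists_reflect`). As `|z₀| + r < 1`, `ψ` is a strict Euclidean contraction on the unit disc, so
the finite set of zeros has diameter zero (`zeros_eq`). The common zero `b` is a fixed point of `ψ`
with `|1 - z₀ conj b| = 1`, which forces `b = z₀ = 0` (`fixed_point_eq_zero`).
-/

open Complex ComplexConjugate

/-- `P(z) = ∏ (1 - (z - z₀) conj(a k - z₀) / r²)`, whose roots are the reflections of the `a k` in
the circle `|z - z₀| = r`; a zero `a k = z₀` contributes the constant factor `1`. For `z₀ = 0`, `r = 1` it is the denominator of the Blaschke product. -/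
noncomputable def reflPoly {d : ℕ} (a : Fin d → ℂ) (z₀ : ℂ) (r : ℝ) : Polynomial ℂ :=
  ∏ k, (Polynomial.C (-(conj (a k - z₀) / (r : ℂ) ^ 2)) * Polynomial.X +
    Polynomial.C (1 + z₀ * (conj (a k - z₀) / (r : ℂ) ^ 2)))

lemma reflPoly_eval {d : ℕ} (a : Fin d → ℂ) (z₀ : ℂ) (r : ℝ) (z : ℂ) :
    (reflPoly a z₀ r).eval z = ∏ k, (1 - (z - z₀) * (conj (a k - z₀) / (r : ℂ) ^ 2)) := by
  rw [reflPoly, Polynomial.eval_prod]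
  refine Finset.prod_congr rfl fun k _ => ?_
  simp only [Polynomial.eval_add, Polynomial.eval_mul, Polynomial.eval_C, Polynomial.eval_X]
  ring

lemma reflPoly_eval_unit {d : ℕ} (a : Fin d → ℂ) (z : ℂ) :
    (reflPoly a 0 1).eval z = ∏ k, (1 - z * conj (a k)) := by
  simp [reflPoly_eval]

/-- The coefficient of `z ^ d` vanishes exactly when some reflected zero is the point at
infinity. -/
lemma reflPoly_coeff {d : ℕ} (a : Fin d → ℂ) (z₀ : ℂ) (r : ℝ) :
    (reflPoly a z₀ r).coeff d = ∏ k, (-(conj (a k - z₀) / (r : ℂ) ^ 2)) := by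
  have h := Polynomial.coeff_prod_of_natDegree_le (s := (Finset.univ : Finset (Fin d)))
    (fun k => Polynomial.C (-(conj (a k - z₀) / (r : ℂ) ^ 2)) * Polynomial.X +
      Polynomial.C (1 + z₀ * (conj (a k - z₀) / (r : ℂ) ^ 2))) 1
    (fun k _ => Polynomial.natDegree_linear_le)
  rw [Finset.card_univ, Fintype.card_fin, mul_one] at h
  rw [reflPoly, h]
  refine Finset.prod_congr rfl fun k _ => ?_
  simp [Polynomial.coeff_one]

lemma norm_add_radius_lt {z₀ : ℂ} {r : ℝ} (hr : 0 < r)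
    (hsub : ∀ z : ℂ, ‖z - z₀‖ = r → ‖z‖ < 1) : ‖z₀‖ + r < 1 := by
  by_cases h0 : z₀ = 0
  · have := hsub (r : ℂ) (by simp [h0, abs_of_pos hr])
    simpa [h0, abs_of_pos hr] using this
  · have hn : 0 < ‖z₀‖ := norm_pos_iff.2 h0
    have h := hsub (((1 + r / ‖z₀‖ : ℝ) : ℂ) * z₀) (by
      have : ((1 + r / ‖z₀‖ : ℝ) : ℂ) * z₀ - z₀ = ((r / ‖z₀‖ : ℝ) : ℂ) * z₀ := by
        push_cast; ring
      rw [this, norm_mul, Complex.norm_real, Real.norm_of_nonneg (by positivity)]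
      field_simp)
    rw [norm_mul, Complex.norm_real, Real.norm_of_nonneg (by positivity)] at h
    have e : (1 + r / ‖z₀‖) * ‖z₀‖ = ‖z₀‖ + r := by field_simp
    linarith

lemma one_sub_ne_zero {z a : ℂ} (hz : ‖z‖ ≤ 1) (ha : ‖a‖ < 1) : 1 - z * conj a ≠ 0 := by
  intro h
  have h1 : ‖z * conj a‖ = 1 := by rw [← sub_eq_zero.1 h, norm_one]
  rw [norm_mul, RCLike.norm_conj] at h1
  nlinarith [norm_nonneg z, norm_nonneg a]

lemma factor_norm_one {z a : ℂ} (hz : ‖z‖ = 1) (ha : ‖a‖ < 1) :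
    ‖(z - a) / (1 - z * conj a)‖ = 1 := by
  have h1 : 1 - z * conj a = z * conj (z - a) := by
    have : z * conj z = 1 := by rw [Complex.mul_conj, Complex.normSq_eq_norm_sq, hz]; simp
    rw [map_sub, mul_sub, this]
  have h2 := one_sub_ne_zero hz.le ha
  rw [norm_div, div_eq_one_iff_eq (norm_ne_zero_iff.2 h2), h1, norm_mul, hz, RCLike.norm_conj,
    one_mul]

/-- If `|B| = t` only on the circle `|z - z₀| = r`, all zeros of `B` are enclosed by it. -/
lemma zero_mem_disc {d : ℕ} {a : Fin d → ℂ} (ha : ∀ k, ‖a k‖ < 1) {t r : ℝ}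
    (ht : t ∈ Set.Ioo (0 : ℝ) 1) {z₀ : ℂ} (hr : 0 < r)
    (hlevel : ∀ z : ℂ, (‖z‖ < 1 ∧ ‖∏ k, (z - a k) / (1 - z * conj (a k))‖ = t) ↔ ‖z - z₀‖ = r)
    (j : Fin d) : ‖a j - z₀‖ < r := by
  by_contra! hge
  have hB0 : ‖∏ k, (a j - a k) / (1 - a j * conj (a k))‖ = 0 := by
    rw [norm_eq_zero]
    exact Finset.prod_eq_zero (Finset.mem_univ j) (by simp)
  have hgt : r < ‖a j - z₀‖ := by
    refine lt_of_le_of_ne hge fun h => ?_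
    have := ((hlevel (a j)).2 h.symm).2
    rw [hB0] at this
    exact ht.1.ne this
  let γ : ℝ → ℂ := fun s => a j + (s : ℂ) * (a j - z₀)
  have hγ : Continuous γ := by fun_prop
  -- The ray `γ` meets the unit circle: its norm is at least `1` at parameter `2 / r`.
  obtain ⟨S, hS, hS1⟩ : ∃ S ∈ Set.Icc (0 : ℝ) (2 / r), ‖γ S‖ = 1 := by
    have hbig : 1 ≤ ‖γ (2 / r)‖ := by
      have h1 : ‖((2 / r : ℝ) : ℂ) * (a j - z₀)‖ ≤ ‖γ (2 / r)‖ + ‖a j‖ := by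
        have := norm_sub_le (γ (2 / r)) (a j)
        simpa [γ] using this
      rw [norm_mul, Complex.norm_real, Real.norm_of_nonneg (by positivity)] at h1
      have h2 : 2 ≤ 2 / r * ‖a j - z₀‖ := by
        rw [div_mul_eq_mul_div, le_div_iff₀ hr]; linarith
      linarith [ha j]
    have := intermediate_value_Icc (f := fun s => ‖γ s‖) (by positivity : (0 : ℝ) ≤ 2 / r)
      hγ.norm.continuousOn
    exact this ⟨by simpa [γ] using (ha j).le, hbig⟩
  have hin : ∀ s ∈ Set.Icc (0 : ℝ) S, ‖γ s‖ ≤ 1 := by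
    intro s hs
    rcases hS.1.eq_or_lt with h0 | hSpos
    · have : s = S := by linarith [hs.1, hs.2]
      rw [this, hS1]
    · have e : γ s = ((1 - s / S : ℝ) : ℂ) * a j + ((s / S : ℝ) : ℂ) * γ S := by
        have : (S : ℂ) ≠ 0 := by exact_mod_cast hSpos.ne'
        simp only [γ]; push_cast; field_simp; ring
      have h1 : 0 ≤ s / S := div_nonneg hs.1 hSpos.le
      have h2 : 0 ≤ 1 - s / S := by
        have := (div_le_one hSpos).2 hs.2
        linarith
      rw [e]
      refine (norm_add_le _ _).trans ?_
      rw [norm_mul, norm_mul, Complex.norm_real, Complex.norm_real, Real.norm_of_nonneg h1,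
        Real.norm_of_nonneg h2, hS1]
      nlinarith [ha j]
  have hcont : ContinuousOn (fun s => ‖∏ k, (γ s - a k) / (1 - γ s * conj (a k))‖)
      (Set.Icc 0 S) := by
    refine ContinuousOn.norm (continuousOn_finsetProd _ fun k _ => ?_)
    exact ContinuousOn.div (by fun_prop) (by fun_prop)
      fun s hs => one_sub_ne_zero (hin s hs) (ha k)
  have hγ0 : γ 0 = a j := by simp [γ]
  have hone : ∀ z : ℂ, ‖z‖ = 1 → ‖∏ k, (z - a k) / (1 - z * conj (a k))‖ = 1 := by
    intro z hz
    rw [norm_prod]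
    exact Finset.prod_eq_one fun k _ => factor_norm_one hz (ha k)
  obtain ⟨s, hs, hst⟩ := intermediate_value_Icc hS.1 hcont
    (show t ∈ Set.Icc _ _ from ⟨by simp only [hγ0, hB0]; exact ht.1.le,
      by simp only [hone _ hS1]; exact ht.2.le⟩)
  have hlt : ‖γ s‖ < 1 := by
    refine lt_of_le_of_ne (hin s hs) fun h => ?_
    exact ht.2.ne (hst.symm.trans (hone _ h))
  have hcirc := (hlevel (γ s)).1 ⟨hlt, hst⟩
  have e : γ s - z₀ = ((1 + s : ℝ) : ℂ) * (a j - z₀) := by simp only [γ]; push_cast; ring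
  rw [e, norm_mul, Complex.norm_real, Real.norm_of_nonneg (by linarith [hs.1])] at hcirc
  nlinarith [hs.1, norm_nonneg (a j - z₀)]

/-- On the circle `|z - z₀| = r`, `|z - a|` is `r` times the modulus of the linear factor vanishing
at the reflection of `a` in that circle. -/
lemma factor_norm_circle {z a z₀ : ℂ} {r : ℝ} (hr : 0 < r) (hz : ‖z - z₀‖ = r) :
    ‖z - a‖ = r * ‖1 - (z - z₀) * (conj (a - z₀) / (r : ℂ) ^ 2)‖ := by
  have hrc : (r : ℂ) ≠ 0 := by exact_mod_cast hr.ne'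
  have h1 : (z - z₀) * conj (z - z₀) = (r : ℂ) ^ 2 := by
    rw [Complex.mul_conj, Complex.normSq_eq_norm_sq, hz]; push_cast; rfl
  have h2 : (r : ℂ) ^ 2 * (1 - (z - z₀) * (conj (a - z₀) / (r : ℂ) ^ 2))
      = (z - z₀) * conj (z - a) := by
    have : conj (z - a) = conj (z - z₀) - conj (a - z₀) := by simp
    rw [this, mul_sub (z - z₀), h1]
    field_simp
  have h3 := congrArg norm h2
  rw [norm_mul, norm_mul, RCLike.norm_conj, hz, norm_pow, Complex.norm_real,
    Real.norm_of_nonneg hr.le] at h3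
  have : r * (r * ‖1 - (z - z₀) * (conj (a - z₀) / (r : ℂ) ^ 2)‖) = r * ‖z - a‖ := by
    rw [← h3]; ring
  exact (mul_left_cancel₀ hr.ne' this).symm

/-- Two polynomials without zeros on a closed disc and with equal moduli on its boundary differ by
a unimodular factor. -/
lemma eq_const_mul_of_norm_eq {p q : Polynomial ℂ} {z₀ : ℂ} {r : ℝ} (hr : 0 < r)
    (hp : ∀ z, ‖z - z₀‖ ≤ r → p.eval z ≠ 0) (hq : ∀ z, ‖z - z₀‖ ≤ r → q.eval z ≠ 0)
    (hpq : ∀ z, ‖z - z₀‖ = r → ‖p.eval z‖ = ‖q.eval z‖) :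
    ∃ c : ℂ, ‖c‖ = 1 ∧ p = Polynomial.C c * q := by
  have key : ∀ p q : Polynomial ℂ, (∀ z, ‖z - z₀‖ ≤ r → q.eval z ≠ 0) →
      (∀ z, ‖z - z₀‖ = r → ‖p.eval z‖ = ‖q.eval z‖) →
      DiffContOnCl ℂ (fun z => p.eval z / q.eval z) (Metric.ball z₀ r) ∧
      ∀ z, ‖z - z₀‖ ≤ r → ‖p.eval z / q.eval z‖ ≤ 1 := by
    intro p q hq hpq
    have hd : DiffContOnCl ℂ (fun z => p.eval z / q.eval z) (Metric.ball z₀ r) := by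
      refine DifferentiableOn.diffContOnCl ?_
      rw [closure_ball z₀ hr.ne']
      exact p.differentiable.differentiableOn.div q.differentiable.differentiableOn
        fun z hz => hq z (by simpa [dist_eq_norm] using hz)
    refine ⟨hd, fun z hz => ?_⟩
    refine Complex.norm_le_of_forall_mem_frontier_norm_le (U := Metric.ball z₀ r)
      Metric.isBounded_ball hd (fun w hw => ?_) ?_
    · rw [frontier_ball z₀ hr.ne', mem_sphere_iff_norm] at hw
      rw [norm_div, hpq w hw, div_self]
      exact norm_ne_zero_iff.2 (hq w hw.le)
    · rw [closure_ball z₀ hr.ne', mem_closedBall_iff_norm]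
      exact hz
  obtain ⟨hd, h1⟩ := key p q hq hpq
  obtain ⟨-, h2⟩ := key q p hp fun z hz => (hpq z hz).symm
  have hone : ∀ z, ‖z - z₀‖ ≤ r → ‖p.eval z / q.eval z‖ = 1 := by
    intro z hz
    refine le_antisymm (h1 z hz) ?_
    have h := h2 z hz
    rw [norm_div] at h ⊢
    rw [div_le_one (norm_pos_iff.2 (hp z hz))] at h
    rwa [one_le_div (norm_pos_iff.2 (hq z hz))]
  have hmax : IsMaxOn (norm ∘ fun z => p.eval z / q.eval z) (Metric.ball z₀ r) z₀ := by
    intro z hz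
    have hz' : ‖z - z₀‖ ≤ r := by
      rw [mem_ball_iff_norm] at hz; exact hz.le
    simp only [Set.mem_ofPred_eq, Function.comp]
    rw [hone z hz', hone z₀ (by simpa using hr.le)]
  have heq := Complex.eqOn_of_isPreconnected_of_isMaxOn_norm
    (convex_ball z₀ r).isPreconnected Metric.isOpen_ball hd.differentiableOn
    (Metric.mem_ball_self hr) hmax
  refine ⟨p.eval z₀ / q.eval z₀, hone z₀ (by simpa using hr.le), ?_⟩
  refine Polynomial.eq_of_infinite_eval_eq _ _ ((infinite_of_mem_nhds z₀
    (Metric.ball_mem_nhds z₀ hr)).mono fun z hz => ?_)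
  have hz' : ‖z - z₀‖ ≤ r := by
    rw [mem_ball_iff_norm] at hz; exact hz.le
  have h := heq hz
  simp only [Function.const] at h
  rw [Set.mem_ofPred_eq, Polynomial.eval_mul, Polynomial.eval_C, ← h,
    div_mul_cancel₀ _ (hq z hz')]

lemma reflected_eq_const_mul {d : ℕ} {a : Fin d → ℂ} (ha : ∀ k, ‖a k‖ < 1) {r : ℝ} {z₀ : ℂ}
    (hr : 0 < r) (hsum : ‖z₀‖ + r < 1) (hin : ∀ k, ‖a k - z₀‖ < r)
    (hlevel : ∀ z : ℂ, ‖z - z₀‖ = r → ‖∏ k, (z - a k) / (1 - z * conj (a k))‖ = r ^ d) :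
    ∃ c : ℂ, ‖c‖ = 1 ∧ reflPoly a z₀ r = Polynomial.C c * reflPoly a 0 1 := by
  have hrc : (r : ℂ) ≠ 0 := by exact_mod_cast hr.ne'
  have hdisc : ∀ z, ‖z - z₀‖ ≤ r → ‖z‖ ≤ 1 := fun z hz => by
    have := norm_add_le (z - z₀) z₀
    rw [sub_add_cancel] at this
    linarith
  have hq : ∀ z, ‖z - z₀‖ ≤ r → (reflPoly a 0 1).eval z ≠ 0 := fun z hz => by
    rw [reflPoly_eval_unit]
    exact Finset.prod_ne_zero_iff.2 fun k _ => one_sub_ne_zero (hdisc z hz) (ha k)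
  refine eq_const_mul_of_norm_eq hr (fun z hz => ?_) hq fun z hz => ?_
  · rw [reflPoly_eval]
    refine Finset.prod_ne_zero_iff.2 fun k _ h => ?_
    have h1 : (z - z₀) * conj (a k - z₀) = (r : ℂ) ^ 2 := by
      have := sub_eq_zero.1 h
      field_simp at this
      exact this.symm
    have h2 := congrArg norm h1
    rw [norm_mul, RCLike.norm_conj, norm_pow, Complex.norm_real, Real.norm_of_nonneg hr.le] at h2
    nlinarith [hin k, norm_nonneg (z - z₀), norm_nonneg (a k - z₀)]
  · have h := hlevel z hz
    have hQ := hq z hz.le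
    rw [reflPoly_eval_unit] at hQ ⊢
    rw [Finset.prod_div_distrib, norm_div, div_eq_iff (norm_ne_zero_iff.2 hQ), norm_prod,
      Finset.prod_congr rfl fun k _ => factor_norm_circle (a := a k) hr hz,
      Finset.prod_mul_distrib, Finset.prod_const, Finset.card_univ, Fintype.card_fin] at h
    rw [reflPoly_eval, norm_prod]
    exact mul_left_cancel₀ (pow_ne_zero d hr.ne') h

/-- Every zero is of the form `z₀ + r² b / (1 - b conj z₀)` for another zero `b`. -/
lemma exists_reflect {d : ℕ} {a : Fin d → ℂ} {r : ℝ} {z₀ c : ℂ} (hr : 0 < r) (hc : c ≠ 0)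
    (h : reflPoly a z₀ r = Polynomial.C c * reflPoly a 0 1) (j : Fin d) :
    ∃ k, (a j - z₀) * (1 - a k * conj z₀) = (r : ℂ) ^ 2 * a k := by
  have hrc : (r : ℂ) ≠ 0 := by exact_mod_cast hr.ne'
  by_cases hj : a j - z₀ = 0
  · -- The reflection of `z₀` is infinity, so both sides have degree less than `d`.
    have h1 := congrArg (fun p => Polynomial.coeff p d) h
    simp only [Polynomial.coeff_C_mul, reflPoly_coeff] at h1
    rw [Finset.prod_eq_zero (Finset.mem_univ j) (by simp [hj])] at h1
    obtain ⟨k, -, hk⟩ := Finset.prod_eq_zero_iff.1 ((mul_eq_zero.1 h1.symm).resolve_left hc)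
    have hk0 : a k = 0 := by simpa using hk
    exact ⟨k, by simp [hj, hk0]⟩
  · have hjc : conj (a j - z₀) ≠ 0 := (map_ne_zero _).2 hj
    have h1 := congrArg (Polynomial.eval (z₀ + (r : ℂ) ^ 2 / conj (a j - z₀))) h
    rw [Polynomial.eval_mul, Polynomial.eval_C, reflPoly_eval_unit, reflPoly_eval,
      Finset.prod_eq_zero (Finset.mem_univ j)
        (by rw [add_sub_cancel_left, div_mul_div_cancel₀ hjc, div_self (pow_ne_zero 2 hrc),
          sub_self])] at h1
    obtain ⟨k, -, hk⟩ := Finset.prod_eq_zero_iff.1 ((mul_eq_zero.1 h1.symm).resolve_left hc)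
    refine ⟨k, ?_⟩
    have h2 := congrArg conj hk
    simp only [map_sub, map_one, map_mul, map_add, map_div₀, map_pow, Complex.conj_conj,
      Complex.conj_ofReal, map_zero] at h2
    field_simp at h2
    linear_combination h2

lemma norm_one_sub_gt {z₀ b : ℂ} {r : ℝ} (hsum : ‖z₀‖ + r < 1) (hb : ‖b‖ < 1) :
    r < ‖1 - b * conj z₀‖ := by
  have h1 := norm_sub_norm_le (1 : ℂ) (b * conj z₀)
  rw [norm_mul, RCLike.norm_conj, norm_one] at h1
  nlinarith [norm_nonneg z₀, norm_nonneg b]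

/-- A finite set that is covered by its image under the contraction
`b ↦ z₀ + r² b / (1 - b conj z₀)` has at most one element. -/
lemma zeros_eq {d : ℕ} {a : Fin d → ℂ} (ha : ∀ k, ‖a k‖ < 1) {r : ℝ} {z₀ : ℂ} (hr : 0 < r)
    (hsum : ‖z₀‖ + r < 1)
    (h : ∀ j, ∃ k, (a j - z₀) * (1 - a k * conj z₀) = (r : ℂ) ^ 2 * a k) (i j : Fin d) :
    a i = a j := by
  have : Nonempty (Fin d × Fin d) := ⟨(i, j)⟩
  obtain ⟨⟨p, q⟩, hmax⟩ := Finite.exists_max fun x : Fin d × Fin d => ‖a x.1 - a x.2‖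
  obtain ⟨k, hk⟩ := h p
  obtain ⟨l, hl⟩ := h q
  have e : (a p - a q) * ((1 - a k * conj z₀) * (1 - a l * conj z₀))
      = (r : ℂ) ^ 2 * (a k - a l) := by
    linear_combination (1 - a l * conj z₀) * hk - (1 - a k * conj z₀) * hl
  have e' := congrArg norm e
  rw [norm_mul, norm_mul, norm_mul, norm_pow, Complex.norm_real, Real.norm_of_nonneg hr.le] at e'
  have hM := hmax (k, l)
  simp only at hM
  have hX := norm_one_sub_gt hsum (ha k)
  have hY := norm_one_sub_gt hsum (ha l)
  have hXY : r ^ 2 < ‖1 - a k * conj z₀‖ * ‖1 - a l * conj z₀‖ := by nlinarith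
  have h0 : ‖a p - a q‖ ≤ 0 := by
    by_contra! hpos
    have h1 := mul_lt_mul_of_pos_left hXY hpos
    have h2 := mul_le_mul_of_nonneg_left hM (sq_nonneg r)
    linarith
  have hij := (hmax (i, j)).trans h0
  exact sub_eq_zero.1 (norm_le_zero_iff.1 hij)

/-- The fixed point equation makes `b conj z₀` real; as its modulus is less than `1`, the
normalization `|1 - b conj z₀| = 1` makes it zero. -/
lemma fixed_point_eq_zero {b z₀ : ℂ} {r : ℝ} (hr : 0 < r) (hsum : ‖z₀‖ + r < 1) (hb : ‖b‖ < 1)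
    (hfix : (b - z₀) * (1 - b * conj z₀) = (r : ℂ) ^ 2 * b) (hone : ‖1 - b * conj z₀‖ = 1) :
    b = 0 ∧ z₀ = 0 := by
  have hr1 : r < 1 := by linarith [norm_nonneg z₀]
  by_cases hb0 : b = 0
  · subst hb0
    simpa using hfix
  by_cases hz0 : z₀ = 0
  · subst hz0
    have h : b * (1 - (r : ℂ) ^ 2) = 0 := by
      simp only [sub_zero, map_zero, mul_zero, mul_one] at hfix
      linear_combination hfix
    have h2 : ((1 - r ^ 2 : ℝ) : ℂ) = 0 := by
      push_cast
      exact (mul_eq_zero.1 h).resolve_left hb0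
    have h3 : 1 - r ^ 2 = 0 := by exact_mod_cast h2
    nlinarith
  exfalso
  obtain ⟨q, hq⟩ : ∃ q, q = b * conj z₀ := ⟨_, rfl⟩
  have hqn : ‖q‖ < 1 := by
    rw [hq, norm_mul, RCLike.norm_conj]
    nlinarith [norm_nonneg z₀, norm_nonneg b]
  have hq0 : q ≠ 0 := by
    rw [hq]; exact mul_ne_zero hb0 (by simpa using hz0)
  have hqc : conj q = conj b * z₀ := by rw [hq]; simp
  have hbb : b * conj b = ((‖b‖ ^ 2 : ℝ) : ℂ) := by
    rw [Complex.mul_conj, Complex.normSq_eq_norm_sq]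
  have hzz : z₀ * conj z₀ = ((‖z₀‖ ^ 2 : ℝ) : ℂ) := by
    rw [Complex.mul_conj, Complex.normSq_eq_norm_sq]
  have e : ((‖b‖ ^ 2 : ℝ) : ℂ) * q + conj q
      = ((‖b‖ ^ 2 * (1 + ‖z₀‖ ^ 2 - r ^ 2) : ℝ) : ℂ) := by
    push_cast [← hbb, ← hzz] at *
    rw [← hbb, ← hzz, hqc, hq]
    linear_combination (-conj b) * hfix
  have him := congrArg Complex.im e
  rw [Complex.add_im, Complex.im_ofReal_mul, Complex.conj_im, Complex.ofReal_im] at him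
  have hb2 : ‖b‖ ^ 2 < 1 := by nlinarith [norm_nonneg b]
  have hqi : q.im = 0 := by
    have : (‖b‖ ^ 2 - 1) * q.im = 0 := by linarith
    exact (mul_eq_zero.1 this).resolve_left (by linarith)
  rw [← hq] at hone
  have h1 : Complex.normSq (1 - q) = 1 := by rw [Complex.normSq_eq_norm_sq, hone]; norm_num
  rw [Complex.normSq_apply] at h1
  simp only [Complex.sub_re, Complex.one_re, Complex.sub_im, Complex.one_im, hqi] at h1
  have h2 : q.re * (q.re - 2) = 0 := by linarith
  have h3 : q.re - 2 ≠ 0 := by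
    have := (Complex.re_le_norm q)
    linarith
  exact hq0 (Complex.ext ((mul_eq_zero.1 h2).resolve_right h3) hqi)

theorem circular_level_set_rigidity (d : ℕ) (hd : 0 < d) (s : ℝ) (a : Fin d → ℂ)
    (ha : ∀ k, ‖a k‖ < 1) (t : ℝ) (ht : t ∈ Set.Ioo (0:ℝ) 1) (z₀ : ℂ)
    (hsub : ∀ z : ℂ, ‖z - z₀‖ = t ^ ((1:ℝ) / d) → ‖z‖ < 1)
    (hlevel : {z : ℂ | ‖z‖ < 1 ∧
        ‖Complex.exp (Complex.I * s) * ∏ k, (z - a k) / (1 - z * conj (a k))‖ = t} =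
      {z : ℂ | ‖z - z₀‖ = t ^ ((1:ℝ) / d)}) :
    z₀ = 0 ∧ ∃ c : ℂ, ‖c‖ = 1 ∧ ∀ z : ℂ,
      Complex.exp (Complex.I * s) * ∏ k, (z - a k) / (1 - z * conj (a k)) = c * z ^ d := by
  have hexp : ‖Complex.exp (Complex.I * s)‖ = 1 := by
    rw [mul_comm]; exact Complex.norm_exp_ofReal_mul_I s
  obtain ⟨r, hrdef⟩ : ∃ r, r = t ^ ((1:ℝ) / d) := ⟨_, rfl⟩
  have hr : 0 < r := by rw [hrdef]; exact Real.rpow_pos_of_pos ht.1 _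
  have hrd : r ^ d = t := by
    rw [hrdef, one_div]; exact Real.rpow_inv_natCast_pow ht.1.le hd.ne'
  rw [← hrdef] at hsub hlevel
  have hlev : ∀ z : ℂ,
      (‖z‖ < 1 ∧ ‖∏ k, (z - a k) / (1 - z * conj (a k))‖ = t) ↔ ‖z - z₀‖ = r := by
    intro z
    have := Set.ext_iff.1 hlevel z
    rwa [Set.mem_ofPred_eq, Set.mem_ofPred_eq, norm_mul, hexp, one_mul] at this
  have hsum := norm_add_radius_lt hr hsub
  obtain ⟨c, hc, hP⟩ := reflected_eq_const_mul ha hr hsum (zero_mem_disc ha ht hr hlev)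
    fun z hz => by rw [hrd]; exact ((hlev z).2 hz).2
  have hc0 : c ≠ 0 := norm_ne_zero_iff.1 (by rw [hc]; exact one_ne_zero)
  have hrefl := exists_reflect hr hc0 hP
  have heq := zeros_eq ha hr hsum hrefl
  let i : Fin d := ⟨0, hd⟩
  obtain ⟨k, hk⟩ := hrefl i
  rw [heq k i] at hk
  have hQ : ‖1 - a i * conj z₀‖ = 1 := by
    have h1 := congrArg (fun p => ‖Polynomial.eval z₀ p‖) hP
    simp only [Polynomial.eval_mul, Polynomial.eval_C, reflPoly_eval, sub_self,
      zero_mul, sub_zero, Finset.prod_const_one, norm_one, norm_mul, hc, one_mul] at h1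
    rw [Finset.prod_congr rfl fun k _ => by rw [heq k i], Finset.prod_const, Finset.card_univ,
      Fintype.card_fin, norm_pow] at h1
    have h2 := (pow_eq_one_iff_of_nonneg (norm_nonneg _) hd.ne').1 h1.symm
    rw [← h2, ← RCLike.norm_conj]
    simp [mul_comm]
  obtain ⟨hi, hz⟩ := fixed_point_eq_zero hr hsum (ha i) hk hQ
  refine ⟨hz, _, hexp, fun z => ?_⟩
  have h0 : ∀ k, a k = 0 := fun k => (heq k i).trans hi
  simp [h0]
end
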